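/- One has φ(b) = n_J − n_{H*}, where n_J and n_{H*} denote the numbers of odd exponents of the finite Weyl groups W_J and W_{H*} respectively, and b is the shortest element of the double coset W_J μ W_J. -/

import Mathlib

set_option synthInstance.maxHeartbeats 1000000
set_option maxHeartbeats 2000000

open scoped Classical

noncomputable section

namespace LY

/-! ## The coefficient field `ℚ(q)` -/

/-- The field `ℚ(q)` of rational functions. -/
abbrev K : Type := RatFunc ℚ

/-- The indeterminate `q`. -/
def qK : K := RatFunc.X

/-- The inclusion `ℤ[q] → ℚ(q)`. -/
def toK (p : Polynomial ℤ) : K := algebraMap (Polynomial ℚ) K (p.map (Int.castRingHom ℚ))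

/-- Evaluation of `p ∈ ℤ[q]` at `−q`, as an element of `ℚ(q)`; i.e. `p(−q)`. -/
def atNegQ (p : Polynomial ℤ) : K := Polynomial.eval₂ (Int.castRingHom K) (-qK) p

/-- The standard basis element `T_w` (resp. `a_w`) of the function model `W → ℚ(q)`
of the Hecke algebra (resp. of the Lusztig–Vogan module `M`). -/
def TT {W : Type} (w : W) : W → K := fun y => if y = w then 1 else 0

variable {B W : Type} [Group W] {M : CoxeterMatrix B}

/-- The Bruhat order on a Coxeter group: `u ≤ v` iff `v` is obtained from `u` by successive
right multiplications by reflections, each increasing the length. -/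
def BruhatLE (cs : CoxeterSystem M W) (u v : W) : Prop :=
  Relation.ReflTransGen
    (fun a b => cs.length a < cs.length b ∧ ∃ t, cs.IsReflection t ∧ b = a * t) u v

/-- Connectedness of the Coxeter diagram of `M`. -/
def DiagramConnected (M : CoxeterMatrix B) : Prop :=
  ∀ i j : B, Relation.ReflTransGen (fun a b => a ≠ b ∧ M a b ≠ 2) i j

/-- An automorphism of `W` preserving the set `S` of simple reflections, i.e. an element
of `A = Aut(W,S)`. -/
def IsDiagAut (cs : CoxeterSystem M W) (a : MulAut W) : Prop :=
  (⇑a) '' (Set.range cs.simple) = Set.range cs.simple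

/-! ## The affine setting -/

/-- All the data and axioms describing the setting: `(W,S)` is the Coxeter group of an
untwisted connected affine Dynkin diagram (an irreducible affine Weyl group); `Λ` is the
subgroup of translations (elements with finite conjugacy class), free abelian of finite
rank and of finite index; `s₀` is a hyperspecial vertex, `J = S − {s₀}`, `W_J` is the
finite subgroup generated by `J` with longest element `w_J`; `*` is the involution of `W`
given by `w* = w_J w w_J` on `W_J` and `λ* = −(ʷᴶλ)` on `Λ`; `pr` is the projection
`W → W_J` along `Λ`; `ρ` is the conjugation action of `W` on `Λ_ℚ ≅ ℚ^rank`
(via the identification `freeIso` of `Λ` with `ℤ^rank`). -/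
structure AffineData (cs : CoxeterSystem M W) where
  finB : Finite B
  conn : DiagramConnected M
  infW : Infinite W
  /-- the subgroup `Λ` of translations -/
  Lam : Subgroup W
  hLam_mem : ∀ w : W, w ∈ Lam ↔ {x : W | IsConj w x}.Finite
  hLam_normal : Lam.Normal
  hLam_comm : ∀ a ∈ Lam, ∀ b ∈ Lam, a * b = b * a
  hLam_index : Lam.FiniteIndex
  /-- `Λ` is free abelian of finite rank -/
  rank : ℕ
  freeIso : Lam ≃* Multiplicative (Fin rank → ℤ)
  /-- the hyperspecial vertex `s₀` -/
  s0 : W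
  hs0_S : s0 ∈ Set.range cs.simple
  /-- `s₀` is hyperspecial: the projection `W → W/Λ` restricts to an isomorphism from the
  subgroup generated by `S − {s₀}` onto `W/Λ`. -/
  hs0_hyper : ∀ w : W, ∃! u : W,
    u ∈ Subgroup.closure (Set.range cs.simple \ {s0}) ∧ w * u⁻¹ ∈ Lam
  hWJ_fin : (Subgroup.closure (Set.range cs.simple \ {s0}) : Set W).Finite
  /-- the longest element `w_J` of `W_J` -/
  wJ : W
  hwJ_mem : wJ ∈ Subgroup.closure (Set.range cs.simple \ {s0})
  hwJ_max : ∀ u ∈ Subgroup.closure (Set.range cs.simple \ {s0}), cs.length u ≤ cs.length wJ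
  /-- the involution `*` of `W` -/
  st : MulAut W
  hst_inv : ∀ w : W, st (st w) = w
  hst_J : ∀ u ∈ Subgroup.closure (Set.range cs.simple \ {s0}), st u = wJ * u * wJ
  hst_Lam : ∀ l ∈ Lam, st l = (wJ * l * wJ⁻¹)⁻¹
  hst_S : ∀ s ∈ Set.range cs.simple, st s ∈ Set.range cs.simple
  /-- lower Bruhat intervals are finite -/
  hBruhat_fin : ∀ w : W, {y : W | BruhatLE cs y w}.Finite
  /-- the projection `W → W_J` along `Λ` (`w ↦ w̄`) -/
  pr : W → W
  hpr : ∀ w : W, pr w ∈ Subgroup.closure (Set.range cs.simple \ {s0}) ∧ w * (pr w)⁻¹ ∈ Lam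
  /-- the conjugation action of `W` on `Λ_ℚ ≅ ℚ^rank` -/
  rho : W → ((Fin rank → ℚ) →ₗ[ℚ] (Fin rank → ℚ))
  hrho : ∀ (w : W) (l : Lam),
    rho w (fun i => ((Multiplicative.toAdd (freeIso l)) i : ℚ)) =
      fun i => ((Multiplicative.toAdd
        (freeIso ⟨w * (l : W) * w⁻¹, hLam_normal.conj_mem _ l.2 w⟩)) i : ℚ)

namespace AffineData

variable {cs : CoxeterSystem M W} (D : AffineData cs)

/-- The set `J = S − {s₀}`. -/
def Jset : Set W := Set.range cs.simple \ {D.s0}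

/-- The finite Weyl group `W_J`. -/
def WJ : Subgroup W := Subgroup.closure D.Jset

/-- `λ ∈ Λ` is a dominant translation (`λ ∈ Λ⁺`). -/
def IsDominant (l : W) : Prop :=
  l ∈ D.Lam ∧ cs.length (l * D.wJ) = cs.length l + cs.length D.wJ

/-- The embedding `Λ → Λ_ℚ = ℚ^rank`. -/
def iota (l : D.Lam) : Fin D.rank → ℚ :=
  fun i => ((Multiplicative.toAdd (D.freeIso l)) i : ℚ)

/-- `e(A)`: the dimension of the `(−1)`-eigenspace of a linear endomorphism `A` of `Λ_ℚ`. -/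
def eNeg (f : (Fin D.rank → ℚ) →ₗ[ℚ] (Fin D.rank → ℚ)) : ℕ :=
  Module.finrank ℚ (Module.End.eigenspace (f : Module.End ℚ (Fin D.rank → ℚ)) (-1))

/-- The map `A_u : λ ↦ ᵘ(λ*) = −(ᵘʷᴶλ)` on `Λ_ℚ`, for `u ∈ W_J`. -/
def Amap (u : W) : (Fin D.rank → ℚ) →ₗ[ℚ] (Fin D.rank → ℚ) := - D.rho (u * D.wJ)

/-- The invariant `φ(w) = e(A_{w̄}) − e(A_e)` for `w ∈ I_*`. -/
def phi (w : W) : ℤ := (D.eNeg (D.Amap (D.pr w)) : ℤ) - (D.eNeg (D.Amap 1) : ℤ)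

/-- The double coset `W_J x W_J`. -/
def DCoset (x : W) : Set W := {y : W | ∃ u ∈ D.WJ, ∃ v ∈ D.WJ, y = u * x * v}

/-- The set `H = J ∩ bJb⁻¹`. -/
def Hset (b : W) : Set W := D.Jset ∩ ((fun s => b * s * b⁻¹) '' D.Jset)

/-- The set `H* ⊆ J`, image of `H` under `*`. -/
def Hstar (b : W) : Set W := (⇑D.st) '' D.Hset b

/-- The subgroup `W_{H*}` generated by `H*`. -/
def WHstar (b : W) : Subgroup W := Subgroup.closure (D.Hstar b)

/-- The reflection representation `R'` of `W_{H*}`, as a subspace of `Λ_ℚ`: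
the span of the vectors `λ − ˢλ` for `λ ∈ Λ`, `s ∈ H*`. -/
def Rprime (b : W) : Submodule ℚ (Fin D.rank → ℚ) :=
  Submodule.span ℚ
    {v : Fin D.rank → ℚ | ∃ l : D.Lam, ∃ s ∈ D.Hstar b,
      v = D.iota l - D.iota ⟨s * (l : W) * s⁻¹, D.hLam_normal.conj_mem _ l.2 s⟩}

/-- `e'(A)`: the dimension of the `(−1)`-eigenspace of an endomorphism `A` of `R'`. -/
def eNeg' {b : W} (f : ↥(D.Rprime b) →ₗ[ℚ] ↥(D.Rprime b)) : ℕ :=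
  Module.finrank ℚ (Module.End.eigenspace (f : Module.End ℚ ↥(D.Rprime b)) (-1))

/-- `φ'(z) = e'(B_z) − e'(B_e)`, where `B_u : x ↦ −u·(w_{H*}·x)` on `R'`; here
`rho'` is the conjugation action of `W_{H*}` on `R'` and `wHs` is the longest element
of `W_{H*}`. -/
def phiP {b : W} (rho' : W → (↥(D.Rprime b) →ₗ[ℚ] ↥(D.Rprime b))) (wHs z : W) : ℤ :=
  (D.eNeg' (-(rho' (z * wHs))) : ℤ) - (D.eNeg' (-(rho' wHs)) : ℤ)

/-- Membership in `A_Λ ⊆ A = Aut(W,S)`: automorphisms acting on `Λ` as conjugation by some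
element of `W_J`. -/
def InALam (a : MulAut W) : Prop :=
  IsDiagAut cs a ∧ ∃ w ∈ D.WJ, ∀ l ∈ D.Lam, a l = w * l * w⁻¹

/-- Membership in the coset `A_Λ* = {a ∘ * : a ∈ A_Λ}`. -/
def InALamStar (c : MulAut W) : Prop := ∃ a : MulAut W, D.InALam a ∧ c = a * D.st

/-- The double coset `W_J x W_J^◇`, where `W_J^◇` is the subgroup generated by
`J^◇ = S − {s₁}`. -/
def DCosetDia (s1 : W) (x : W) : Set W :=
  {y : W | ∃ u ∈ D.WJ, ∃ v ∈ Subgroup.closure (Set.range cs.simple \ {s1}), y = u * x * v}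


end AffineData

/-! ## The Hecke algebra, the Lusztig–Vogan module, and the polynomials `P`, `P^σ` -/

/-- The Hecke algebra of `(W,S)` over `ℚ(q)` (modelled on functions `W → ℚ(q)`, with basis
`TT w = T_w`), together with its bar involution, and the Kazhdan–Lusztig polynomials
`P_{y,w} ∈ ℤ[q]` characterized by their defining properties. -/
structure HeckeData (cs : CoxeterSystem M W) where
  /-- the involution `q ↦ q⁻¹` of `ℚ(q)` -/
  barK : K →+* K
  hbarK_X : barK qK = qK⁻¹
  hbarK_inv : ∀ x, barK (barK x) = x
  /-- the multiplication of the Hecke algebra -/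
  mulH : (W → K) →ₗ[K] (W → K) →ₗ[K] (W → K)
  hmul_assoc : ∀ x y z : W → K, mulH (mulH x y) z = mulH x (mulH y z)
  hmul_one : ∀ x : W → K, mulH (TT 1) x = x ∧ mulH x (TT 1) = x
  hmul_TT : ∀ u v : W, cs.length (u * v) = cs.length u + cs.length v →
    mulH (TT u) (TT v) = TT (u * v)
  hmul_Ts : ∀ s ∈ Set.range cs.simple,
    mulH (TT s) (TT s) = (qK - 1) • TT s + qK • TT (1 : W)
  /-- the bar involution of the Hecke algebra: the ring involution with `q ↦ q⁻¹`,
  `T_w ↦ (T_{w⁻¹})⁻¹` -/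
  barH : (W → K) →+ (W → K)
  hbarH_inv : ∀ x, barH (barH x) = x
  hbarH_smul : ∀ (c : K) (x : W → K), barH (c • x) = barK c • barH x
  hbarH_mul : ∀ x y : W → K, barH (mulH x y) = mulH (barH x) (barH y)
  hbarH_T : ∀ w : W, mulH (barH (TT w)) (TT w⁻¹) = TT (1 : W) ∧
    mulH (TT w⁻¹) (barH (TT w)) = TT (1 : W)
  /-- the Kazhdan–Lusztig polynomials `P_{y,w}` -/
  P : W → W → Polynomial ℤ
  hP_supp : ∀ y w : W, ¬ BruhatLE cs y w → P y w = 0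
  hP_diag : ∀ w : W, P w w = 1
  hP_deg : ∀ y w : W, BruhatLE cs y w → y ≠ w →
    2 * (P y w).natDegree + 1 ≤ cs.length w - cs.length y
  hP_dual : ∀ w : W,
    (qK ^ cs.length w) • barH (fun y => if BruhatLE cs y w then toK (P y w) else 0)
      = fun y => if BruhatLE cs y w then toK (P y w) else 0

/-- The Lusztig–Vogan module `M` over the Hecke algebra `H'` with parameter `q²`, attached to
a length-preserving involutive automorphism `star` of `(W,S)`, together with its bar
involution, and the polynomials `P^σ_{y,w} ∈ ℤ[q]` (for `y, w ∈ I_*`) characterized by their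
defining properties.  Both `H'` and `M` are modelled on functions `W → ℚ(q)`; the basis
element `a_w` of `M` (for `w ∈ I_*`) is `TT w`. -/
structure LVData (cs : CoxeterSystem M W) (star : MulAut W) where
  /-- the involution `q ↦ q⁻¹` of `ℚ(q)` -/
  barK : K →+* K
  hbarK_X : barK qK = qK⁻¹
  hbarK_inv : ∀ x, barK (barK x) = x
  /-- the multiplication of the Hecke algebra `H'` with parameter `q²` -/
  mulH' : (W → K) →ₗ[K] (W → K) →ₗ[K] (W → K)
  hmul'_assoc : ∀ x y z : W → K, mulH' (mulH' x y) z = mulH' x (mulH' y z)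
  hmul'_one : ∀ x : W → K, mulH' (TT 1) x = x ∧ mulH' x (TT 1) = x
  hmul'_TT : ∀ u v : W, cs.length (u * v) = cs.length u + cs.length v →
    mulH' (TT u) (TT v) = TT (u * v)
  hmul'_Ts : ∀ s ∈ Set.range cs.simple,
    mulH' (TT s) (TT s) = (qK ^ 2 - 1) • TT s + (qK ^ 2) • TT (1 : W)
  /-- the bar involution of `H'` -/
  barH' : (W → K) →+ (W → K)
  hbarH'_inv : ∀ x, barH' (barH' x) = x
  hbarH'_smul : ∀ (c : K) (x : W → K), barH' (c • x) = barK c • barH' x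
  hbarH'_mul : ∀ x y : W → K, barH' (mulH' x y) = mulH' (barH' x) (barH' y)
  hbarH'_T : ∀ w : W, mulH' (barH' (TT w)) (TT w⁻¹) = TT (1 : W) ∧
    mulH' (TT w⁻¹) (barH' (TT w)) = TT (1 : W)
  /-- the action of `H'` on the module `M` -/
  actM : (W → K) →ₗ[K] (W → K) →ₗ[K] (W → K)
  hact_one : ∀ m : W → K, actM (TT 1) m = m
  hact_mul : ∀ (h h' : W → K) (m : W → K), actM (mulH' h h') m = actM h (actM h' m)
  hact1 : ∀ s ∈ Set.range cs.simple, ∀ w : W, star w = w⁻¹ →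
    s * w = w * star s → cs.length w < cs.length (s * w) →
    actM (TT s) (TT w) = qK • TT w + (qK + 1) • TT (s * w)
  hact2 : ∀ s ∈ Set.range cs.simple, ∀ w : W, star w = w⁻¹ →
    s * w = w * star s → cs.length (s * w) < cs.length w →
    actM (TT s) (TT w) = (qK ^ 2 - qK - 1) • TT w + (qK ^ 2 - qK) • TT (s * w)
  hact3 : ∀ s ∈ Set.range cs.simple, ∀ w : W, star w = w⁻¹ →
    s * w ≠ w * star s → cs.length w < cs.length (s * w) →
    actM (TT s) (TT w) = TT (s * w * star s)
  hact4 : ∀ s ∈ Set.range cs.simple, ∀ w : W, star w = w⁻¹ →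
    s * w ≠ w * star s → cs.length (s * w) < cs.length w →
    actM (TT s) (TT w) = (qK ^ 2 - 1) • TT w + (qK ^ 2) • TT (s * w * star s)
  /-- the bar involution of the module `M` -/
  barM : (W → K) →+ (W → K)
  hbarM_inv : ∀ m : W → K, barM (barM m) = m
  hbarM_smul : ∀ (c : K) (m : W → K), barM (c • m) = barK c • barM m
  hbarM_act : ∀ (h m : W → K), barM (actM h m) = actM (barH' h) (barM m)
  hbarM_one : barM (TT 1) = TT (1 : W)
  /-- the Lusztig–Vogan polynomials `P^σ_{y,w}` -/
  Psig : W → W → Polynomial ℤ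
  hPsig_supp : ∀ y w : W, ¬ (BruhatLE cs y w ∧ star y = y⁻¹) → Psig y w = 0
  hPsig_diag : ∀ w : W, star w = w⁻¹ → Psig w w = 1
  hPsig_deg : ∀ y w : W, star w = w⁻¹ → star y = y⁻¹ → BruhatLE cs y w → y ≠ w →
    2 * (Psig y w).natDegree + 1 ≤ cs.length w - cs.length y
  hPsig_dual : ∀ w : W, star w = w⁻¹ →
    (qK ^ (2 * cs.length w)) •
        barM (fun y => if BruhatLE cs y w ∧ star y = y⁻¹ then toK (Psig y w) else 0)
      = fun y => if BruhatLE cs y w ∧ star y = y⁻¹ then toK (Psig y w) else 0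

/-! ## The `Z`-polynomials -/

/-- `Z_w(q) = Σ_{y ≤ w} P_{y,w}(q) q^{ℓ(y)}`. -/
def Zpoly (cs : CoxeterSystem M W) (HD : HeckeData cs) (w : W) : K :=
  ∑ᶠ y : W, if BruhatLE cs y w then toK (HD.P y w) * qK ^ cs.length y else 0

/-- `Z_w(−q) = Σ_{y ≤ w} P_{y,w}(−q) (−q)^{ℓ(y)}`. -/
def ZpolyNeg (cs : CoxeterSystem M W) (HD : HeckeData cs) (w : W) : K :=
  ∑ᶠ y : W, if BruhatLE cs y w then atNegQ (HD.P y w) * (-qK) ^ cs.length y else 0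

/-- `Z^σ_w(q) = Σ_{y ≤ w, y ∈ I_*} P^σ_{y,w}(q) q^{ℓ(y)} ((q−1)/(q+1))^{φ(y)}`. -/
def Zsig (cs : CoxeterSystem M W) (D : AffineData cs) (LD : LVData cs D.st) (w : W) : K :=
  ∑ᶠ y : W, if BruhatLE cs y w ∧ D.st y = y⁻¹ then
    toK (LD.Psig y w) * qK ^ cs.length y * ((qK - 1) / (qK + 1)) ^ D.phi y else 0

/-!
Let `w_H` be the longest element of `W_H`. Comparing inversions shows that `b` lies over
`w_H w_J`, so that `A_{b̄}` is `-w_H` on `Λ_ℚ` whereas `A_e` is `-w_J`. For an involution `w` the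
`(-1)`-eigenspaces of `w` and `-w` have complementary dimensions, hence `φ(b)` is the difference of
the dimensions of the `(-1)`-eigenspaces of `w_J` and `w_H`.

The number of odd exponents of `W_L` is the order of vanishing at `q = -1` of its Poincaré
polynomial `P_L`, and this order is the dimension of the `(-1)`-eigenspace of `w_L`, by induction
on `L ⊆ J`:

* A conjugate of `w_L` acts by `-1` on the span of the simple roots of some `K ⊆ L` and lies in
  `W_K`, so it is `w_K`. If `K ≠ L`, then `P_L / P_K`, the length generating function of the
  orbit of a point with stabilizer `W_K`, is positive at `-1`: its value there is the number of
  orbit points on the intersection of some pairwise orthogonal walls, since the other points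
  cancel, and the product of the reflections in these walls, like every involution in `W_L`, fixes
  an orbit point.
* If `K = L`, then the identity `∑_{I ⊆ L} (-1)^|I| P_L / P_I = q^ℓ(w_L)` gives the order of `P_L`
  from the orders of the `P_I` with `I ⊂ L`.

Since `*` preserves lengths, `W_{H*}` has the same Poincaré polynomial as `W_H`.

All of this uses that `W_J` acts on `Λ_ℚ` as a reflection group whose chambers record inversions.
To see this, consider the `λ ∈ Λ` modulo those commuting with `t` for which `t` is an inversion.
With finitely many exceptions, this set is invariant under any given translation and is exchanged
with its complement by `λ ↦ -λ`; since `ℤ²` has only one end, the quotient has rank one, that is,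
`t` acts as a reflection.
-/

/-! ### Inversions and parabolic subgroups -/

section Inversions

variable {B W : Type*} [Group W] {M : CoxeterMatrix B} (cs : CoxeterSystem M W)

/-- The involution `(t, e) ↦ (s t s, e + [t = s])` of `W × ℤ/2`, for the simple reflection `s = sᵢ`.
Together these define an action of `W` which counts inversions modulo 2. -/
def simplePerm (i : B) : Equiv.Perm (W × ZMod 2) :=
  Function.Involutive.toPerm
    (fun p ↦ (cs.simple i * p.1 * cs.simple i, p.2 + if p.1 = cs.simple i then 1 else 0)) <| by
    rintro ⟨t, e⟩
    have hconj : cs.simple i * t * cs.simple i = cs.simple i ↔ t = cs.simple i := by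
      rw [mul_assoc, mul_eq_left, mul_eq_one_iff_eq_inv, cs.inv_simple]
    ext
    · simp [mul_assoc]
    · simp [hconj, add_assoc, CharTwo.add_self_eq_zero]

theorem simplePerm_apply (i : B) (p : W × ZMod 2) :
    simplePerm cs i p =
      (cs.simple i * p.1 * cs.simple i, p.2 + if p.1 = cs.simple i then 1 else 0) :=
  rfl

theorem simplePerm_inv (i : B) : (simplePerm cs i)⁻¹ = simplePerm cs i :=
  rfl

theorem leftInvSeq_append (ω ω' : List B) :
    cs.leftInvSeq (ω ++ ω') =
      cs.leftInvSeq ω ++ (cs.leftInvSeq ω').map (MulAut.conj (cs.wordProd ω)) := by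
  induction ω with
  | nil => simp
  | cons i ω ih => simp [CoxeterSystem.leftInvSeq, ih, cs.wordProd_cons]

theorem count_leftInvSeq_append (ω ω' : List B) (t : W) :
    (cs.leftInvSeq (ω ++ ω')).count t = (cs.leftInvSeq ω).count t +
      (cs.leftInvSeq ω').count ((cs.wordProd ω)⁻¹ * t * cs.wordProd ω) := by
  have ht : t = MulAut.conj (cs.wordProd ω) ((cs.wordProd ω)⁻¹ * t * cs.wordProd ω) := by
    simp [mul_assoc]
  rw [leftInvSeq_append, List.count_append]
  congr 1
  conv_lhs => rw [ht]
  exact List.count_map_of_injective _ _ (MulAut.conj _).injective _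

theorem count_leftInvSeq_cons (i : B) (ω : List B) (t : W) :
    (cs.leftInvSeq (i :: ω)).count t =
      (if t = cs.simple i then 1 else 0) +
        (cs.leftInvSeq ω).count (cs.simple i * t * cs.simple i) := by
  simpa [List.count_singleton, eq_comm (a := t)] using count_leftInvSeq_append cs [i] ω t

theorem prod_map_simplePerm_inv_apply (ω : List B) (t : W) (e : ZMod 2) :
    ((ω.map (simplePerm cs)).prod)⁻¹ (t, e) =
      ((cs.wordProd ω)⁻¹ * t * cs.wordProd ω, e + (cs.leftInvSeq ω).count t) := by
  induction ω generalizing t e with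
  | nil => simp
  | cons i ω ih =>
    rw [List.map_cons, List.prod_cons, mul_inv_rev, Equiv.Perm.mul_apply, simplePerm_inv,
      simplePerm_apply, ih, count_leftInvSeq_cons, cs.wordProd_cons]
    simp [mul_assoc, add_assoc]

theorem even_count_leftInvSeq_alternatingWord (i j : B) (t : W) :
    Even ((cs.leftInvSeq (CoxeterSystem.alternatingWord i j (2 * M i j))).count t) := by
  set l := cs.leftInvSeq (CoxeterSystem.alternatingWord i j (2 * M i j)) with hl
  have hlen : l.length = 2 * M i j := by simp [hl]
  have hperiodic : l.drop (M i j) = l.take (M i j) := by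
    refine List.ext_getElem (by simp [hlen]; lia) fun k hk _ ↦ ?_
    rw [List.length_drop, hlen] at hk
    rw [List.getElem_drop, List.getElem_take]
    simp only [hl]
    rw [cs.getElem_leftInvSeq_alternatingWord _ _ _ _ (by lia),
      cs.getElem_leftInvSeq_alternatingWord _ _ _ _ (by lia),
      cs.prod_alternatingWord_eq_mul_pow, cs.prod_alternatingWord_eq_mul_pow]
    have hhalf : (2 * (M i j + k) + 1) / 2 = M i j + k := by lia
    have hhalf' : (2 * k + 1) / 2 = k := by lia
    simp [hhalf, hhalf', pow_add, cs.simple_mul_simple_pow']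
  rw [← List.take_append_drop (M i j) l, hperiodic, List.count_append]
  exact Even.add_self _

theorem prod_map_alternatingWord {G : Type*} [Group G] (f : B → G) (i j : B) (m : ℕ) :
    ((CoxeterSystem.alternatingWord i j (2 * m)).map f).prod = (f i * f j) ^ m := by
  induction m with
  | zero => simp [CoxeterSystem.alternatingWord]
  | succ m ih =>
    rw [show 2 * (m + 1) = 2 * m + 1 + 1 by ring, CoxeterSystem.alternatingWord_succ',
      CoxeterSystem.alternatingWord_succ']
    simp [ih, pow_succ', mul_assoc]

theorem isLiftable_simplePerm : M.IsLiftable (simplePerm cs) := by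
  intro i j
  rw [← prod_map_alternatingWord, ← inv_eq_one]
  ext1 ⟨t, e⟩
  have heven := even_count_leftInvSeq_alternatingWord cs i j t
  rw [prod_map_simplePerm_inv_apply, (ZMod.natCast_eq_zero_iff_even).2 heven,
    cs.prod_alternatingWord_eq_mul_pow]
  simp [cs.simple_mul_simple_pow]

theorem count_leftInvSeq_mod_two {ω ω' : List B} (h : cs.wordProd ω = cs.wordProd ω') (t : W) :
    ((cs.leftInvSeq ω).count t : ZMod 2) = (cs.leftInvSeq ω').count t := by
  have hlift (ω : List B) : (ω.map (simplePerm cs)).prod =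
      cs.lift ⟨simplePerm cs, isLiftable_simplePerm cs⟩ (cs.wordProd ω) := by
    rw [CoxeterSystem.wordProd, map_list_prod, List.map_map]
    congr 2
    ext1 i
    exact (cs.lift_apply_simple (isLiftable_simplePerm cs) i).symm
  have h0 := prod_map_simplePerm_inv_apply cs ω t 0
  rw [hlift, h, ← hlift, prod_map_simplePerm_inv_apply] at h0
  simpa using (congrArg Prod.snd h0).symm

variable {cs}
variable {t x y : W}

theorem odd_count_leftInvSeq_reflection {ω : List B} (ht : cs.IsReflection t)
    (hω : cs.wordProd ω = t) : Odd ((cs.leftInvSeq ω).count t) := by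
  obtain ⟨u, i, rfl⟩ := ht
  obtain ⟨ν, -, rfl⟩ := cs.exists_isReduced u
  rw [← ZMod.natCast_eq_one_iff_odd, count_leftInvSeq_mod_two cs
    (ω' := ν ++ ([i] ++ ν.reverse)) (by simp [hω, cs.wordProd_append, cs.wordProd_cons, mul_assoc])]
  have hself := count_leftInvSeq_mod_two cs (ω := ν ++ ν.reverse) (ω' := [])
    (by simp [cs.wordProd_append]) (cs.wordProd ν * cs.simple i * (cs.wordProd ν)⁻¹)
  rw [count_leftInvSeq_append] at hself
  rw [count_leftInvSeq_append, count_leftInvSeq_append]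
  simp only [mul_assoc, inv_mul_cancel_left, inv_mul_cancel, mul_one, one_mul, Nat.cast_add,
    cs.leftInvSeq_nil, List.count_nil, Nat.cast_zero, cs.wordProd_singleton, cs.inv_simple,
    cs.simple_mul_simple_self, cs.leftInvSeq_singleton, List.count_singleton_self,
    Nat.cast_one] at hself ⊢
  linear_combination hself

/-- The strong exchange property, for words that need not be reduced. -/
theorem isLeftInversion_wordProd_iff {ω : List B} (ht : cs.IsReflection t) :
    cs.IsLeftInversion (cs.wordProd ω) t ↔ Odd ((cs.leftInvSeq ω).count t) := by
  have of_odd {ω : List B} (h : Odd ((cs.leftInvSeq ω).count t)) :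
      cs.IsLeftInversion (cs.wordProd ω) t := by
    obtain ⟨ν, hν, hων⟩ := cs.exists_isReduced (cs.wordProd ω)
    rw [← ZMod.natCast_eq_one_iff_odd, count_leftInvSeq_mod_two cs hων] at h
    rw [hων]
    refine cs.isLeftInversion_of_mem_leftInvSeq hν (List.count_pos_iff.1 (Nat.pos_of_ne_zero ?_))
    intro h0
    simp [h0] at h
  refine ⟨fun h ↦ ?_, of_odd⟩
  by_contra hodd
  obtain ⟨τ, -, hτ⟩ := cs.exists_isReduced t
  have hmul : Odd ((cs.leftInvSeq (τ ++ ω)).count t) := by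
    rw [count_leftInvSeq_append, ← hτ, inv_mul_cancel, one_mul]
    exact (odd_count_leftInvSeq_reflection ht hτ.symm).add_even (Nat.not_odd_iff_even.1 hodd)
  have := of_odd hmul
  rw [cs.wordProd_append, ← hτ, ht.isLeftInversion_mul_right_iff] at this
  exact this h

theorem isLeftInversion_mul_iff (ht : cs.IsReflection t) :
    cs.IsLeftInversion (x * y) t ↔
      ¬ (cs.IsLeftInversion x t ↔ cs.IsLeftInversion y (x⁻¹ * t * x)) := by
  obtain ⟨ω, -, rfl⟩ := cs.exists_isReduced x
  obtain ⟨ν, -, rfl⟩ := cs.exists_isReduced y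
  have ht' : cs.IsReflection ((cs.wordProd ω)⁻¹ * t * cs.wordProd ω) := by
    simpa using ht.conj (cs.wordProd ω)⁻¹
  rw [← cs.wordProd_append, isLeftInversion_wordProd_iff ht, isLeftInversion_wordProd_iff ht,
    isLeftInversion_wordProd_iff ht', count_leftInvSeq_append, Nat.odd_add]
  grind

theorem setOf_isLeftInversion_wordProd {ω : List B} (hω : cs.IsReduced ω) :
    {t | cs.IsLeftInversion (cs.wordProd ω) t} = (cs.leftInvSeq ω).toFinset := by
  ext t
  rw [Set.mem_ofPred_eq, List.coe_toFinset, Set.mem_ofPred_eq]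
  refine ⟨fun h ↦ ?_, cs.isLeftInversion_of_mem_leftInvSeq hω⟩
  exact List.count_pos_iff.1 ((isLeftInversion_wordProd_iff h.1).1 h).pos

theorem finite_isLeftInversion (w : W) : {t | cs.IsLeftInversion w t}.Finite := by
  obtain ⟨ω, hω, rfl⟩ := cs.exists_isReduced w
  rw [setOf_isLeftInversion_wordProd hω]
  exact Finset.finite_toSet _

theorem ncard_isLeftInversion (w : W) : {t | cs.IsLeftInversion w t}.ncard = cs.length w := by
  obtain ⟨ω, hω, rfl⟩ := cs.exists_isReduced w
  rw [setOf_isLeftInversion_wordProd hω, Set.ncard_coe_finset,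
    List.toFinset_card_of_nodup hω.nodup_leftInvSeq, cs.length_leftInvSeq, hω]

end Inversions

section Parabolic

open Subgroup (closure mem_closure_of_mem closure_induction)

variable {B W : Type*} [Group W] {M : CoxeterMatrix B} {cs : CoxeterSystem M W}
variable {I : Set W} {s t u v w x y : W}

theorem isReflection_of_mem (hI : I ⊆ Set.range cs.simple) (hs : s ∈ I) : cs.IsReflection s := by
  obtain ⟨i, rfl⟩ := hI hs
  exact cs.isReflection_simple i

theorem isReflection_inv_conj (ht : cs.IsReflection t) (w : W) : cs.IsReflection (w⁻¹ * t * w) := by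
  simpa using ht.conj w⁻¹

theorem inv_conj_mem {H : Subgroup W} (ht : t ∈ H) (hw : w ∈ H) : w⁻¹ * t * w ∈ H :=
  H.mul_mem (H.mul_mem (H.inv_mem hw) ht) hw

theorem not_isLeftInversion_one : ¬ cs.IsLeftInversion 1 t := by
  simp [CoxeterSystem.IsLeftInversion]

theorem isLeftInversion_inv_iff (ht : cs.IsReflection t) :
    cs.IsLeftInversion w⁻¹ t ↔ cs.IsLeftInversion w (w * t * w⁻¹) := by
  have h := isLeftInversion_mul_iff (x := w) (y := w⁻¹) (ht.conj w)
  have hconj : w⁻¹ * (w * t * w⁻¹) * w = t := by group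
  rw [mul_inv_cancel, hconj, iff_not_comm, iff_true_right not_isLeftInversion_one] at h
  exact h.symm

theorem eq_simple_of_isLeftInversion {i : B} (h : cs.IsLeftInversion (cs.simple i) t) :
    t = cs.simple i := by
  have ht := h.1
  rw [← cs.wordProd_singleton, isLeftInversion_wordProd_iff ht, cs.leftInvSeq_singleton,
    List.count_singleton] at h
  by_contra hne
  simp [Ne.symm hne] at h

theorem length_simple_mul_of_isLeftInversion (hs : s ∈ Set.range cs.simple)
    (h : cs.IsLeftInversion w s) : cs.length (s * w) + 1 = cs.length w := by
  obtain ⟨i, rfl⟩ := hs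
  exact cs.isLeftDescent_iff.1 h.2

theorem mem_closure_of_isLeftInversion (hI : I ⊆ Set.range cs.simple) (hu : u ∈ closure I)
    (h : cs.IsLeftInversion u t) : t ∈ closure I := by
  have of_conj {x t : W} (hx : x ∈ closure I) (h : x⁻¹ * t * x ∈ closure I) : t ∈ closure I := by
    simpa [mul_assoc] using inv_conj_mem h ((closure I).inv_mem hx)
  induction hu using closure_induction generalizing t with
  | mem s hs =>
    obtain ⟨i, rfl⟩ := hI hs
    exact eq_simple_of_isLeftInversion h ▸ mem_closure_of_mem hs
  | one => exact absurd h not_isLeftInversion_one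
  | mul x y hx _ ihx ihy =>
    by_cases hxt : cs.IsLeftInversion x t
    · exact ihx hxt
    · rw [isLeftInversion_mul_iff h.1, iff_false_left hxt, not_not] at h
      exact of_conj hx (ihy h)
  | inv x hx ih =>
    rw [isLeftInversion_inv_iff h.1] at h
    simpa [mul_assoc] using inv_conj_mem (ih h) hx

theorem exists_wordProd_eq_of_mem_closure (hI : I ⊆ Set.range cs.simple) (hu : u ∈ closure I) :
    ∃ ω : List B, (∀ i ∈ ω, cs.simple i ∈ I) ∧ cs.wordProd ω = u := by
  induction hu using closure_induction with
  | mem s hs =>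
    obtain ⟨i, rfl⟩ := hI hs
    exact ⟨[i], by simpa using hs, by simp⟩
  | one => exact ⟨[], by simp, by simp⟩
  | mul x y _ _ ihx ihy =>
    obtain ⟨ω, hω, rfl⟩ := ihx
    obtain ⟨ν, hν, rfl⟩ := ihy
    exact ⟨ω ++ ν, by simpa [or_imp, forall_and] using ⟨hω, hν⟩, cs.wordProd_append ω ν⟩
  | inv x _ ih =>
    obtain ⟨ω, hω, rfl⟩ := ih
    exact ⟨ω.reverse, by simpa using hω, cs.wordProd_reverse ω⟩

theorem exists_isLeftInversion_wordProd (ω : List B) (hω : ∀ i ∈ ω, cs.simple i ∈ I)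
    (h1 : cs.wordProd ω ≠ 1) : ∃ s ∈ I, cs.IsLeftInversion (cs.wordProd ω) s := by
  induction hn : ω.length using Nat.strong_induction_on generalizing ω with
  | _ n ih =>
  obtain - | ⟨i, ν⟩ := ω
  · simp at h1
  have hi : cs.simple i ∈ I := hω i List.mem_cons_self
  by_cases hdesc : cs.IsLeftInversion (cs.wordProd (i :: ν)) (cs.simple i)
  · exact ⟨_, hi, hdesc⟩
  -- otherwise `sᵢ` can be exchanged against a letter of `ν`, which gives a shorter word
  rw [cs.wordProd_cons, (cs.isReflection_simple i).isLeftInversion_mul_right_iff, not_not,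
    isLeftInversion_wordProd_iff (cs.isReflection_simple i)] at hdesc
  obtain ⟨k, hk, hki⟩ := List.getElem_of_mem (List.count_pos_iff.1 hdesc.pos)
  have herase : cs.wordProd (i :: ν) = cs.wordProd (ν.eraseIdx k) := by
    rw [← cs.getD_leftInvSeq_mul_wordProd, List.getD_eq_getElem _ _ hk, hki, cs.wordProd_cons]
  rw [herase] at h1 ⊢
  have hlt : (ν.eraseIdx k).length < n := by
    rw [← hn, List.length_cons]
    exact Nat.lt_succ_of_le (List.length_eraseIdx_le ν k)
  exact ih _ hlt _ (fun j hj ↦ hω j (List.mem_cons_of_mem _ (List.mem_of_mem_eraseIdx hj))) h1 rfl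

theorem exists_isLeftInversion_of_mem_closure (hI : I ⊆ Set.range cs.simple) (hu : u ∈ closure I)
    (h1 : u ≠ 1) : ∃ s ∈ I, cs.IsLeftInversion u s := by
  obtain ⟨ω, hω, rfl⟩ := exists_wordProd_eq_of_mem_closure hI hu
  exact exists_isLeftInversion_wordProd ω hω h1

theorem eq_one_of_forall_not_isLeftInversion (hI : I ⊆ Set.range cs.simple) (hu : u ∈ closure I)
    (h : ∀ s ∈ I, ¬ cs.IsLeftInversion u s) : u = 1 := by
  contrapose! h
  exact exists_isLeftInversion_of_mem_closure hI hu h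

theorem closure_induction_length (hI : I ⊆ Set.range cs.simple) {P : ∀ u, u ∈ closure I → Prop}
    (one : P 1 (closure I).one_mem)
    (mul : ∀ s u (hs : s ∈ I) (hu : u ∈ closure I), cs.IsLeftInversion (s * u) s → P u hu →
      P (s * u) ((closure I).mul_mem (mem_closure_of_mem hs) hu))
    {u : W} (hu : u ∈ closure I) : P u hu := by
  induction hn : cs.length u using Nat.strong_induction_on generalizing u with
  | _ n ih =>
  obtain rfl | h1 := eq_or_ne u 1
  · exact one
  obtain ⟨s, hs, hdesc⟩ := exists_isLeftInversion_of_mem_closure hI hu h1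
  have hu' := (closure I).mul_mem (mem_closure_of_mem hs) hu
  have hsu : s * (s * u) = u := by rw [← mul_assoc, hdesc.1.mul_self, one_mul]
  have hmul := mul s (s * u) hs hu'
  simp only [hsu] at hmul
  exact hmul hdesc (ih _ (hn ▸ hdesc.2) hu' rfl)

variable (cs) in
/-- `x` is the shortest element of its coset `W_I x`: no reflection of `W_I` is an inversion. -/
def IsLeftReduced (I : Set W) (x : W) : Prop :=
  ∀ t ∈ closure I, ¬ cs.IsLeftInversion x t

theorem isLeftReduced_of_forall_length_le (h : ∀ u ∈ closure I, cs.length x ≤ cs.length (u * x)) :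
    IsLeftReduced cs I x :=
  fun t ht hinv ↦ (h t ht).not_gt hinv.2

theorem IsLeftReduced.isLeftInversion_mul_iff (hy : IsLeftReduced cs I y) (hu : u ∈ closure I)
    (ht : t ∈ closure I) : cs.IsLeftInversion (u * y) t ↔ cs.IsLeftInversion u t := by
  by_cases hrefl : cs.IsReflection t
  · rw [LY.isLeftInversion_mul_iff hrefl, iff_false_right (hy _ (inv_conj_mem ht hu)), not_not]
  · simp [CoxeterSystem.IsLeftInversion, hrefl]

theorem IsLeftReduced.length_mul (hI : I ⊆ Set.range cs.simple) (hy : IsLeftReduced cs I y)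
    (hu : u ∈ closure I) : cs.length (u * y) = cs.length u + cs.length y := by
  induction hu using closure_induction_length hI with
  | one => simp
  | mul s u hs hu hdesc ih =>
    have hsu := (closure I).mul_mem (mem_closure_of_mem hs) hu
    have hdesc' := (hy.isLeftInversion_mul_iff hsu (mem_closure_of_mem hs)).2 hdesc
    have h := length_simple_mul_of_isLeftInversion (hI hs) hdesc
    have h' := length_simple_mul_of_isLeftInversion (hI hs) hdesc'
    rw [← mul_assoc, hdesc.1.mul_self, one_mul] at h
    rw [← mul_assoc, ← mul_assoc, hdesc.1.mul_self, one_mul] at h'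
    lia

variable (cs I x) in
theorem exists_mul_isLeftReduced : ∃ u ∈ closure I, ∃ y, IsLeftReduced cs I y ∧ u * y = x := by
  obtain ⟨v, hv, hmin⟩ := exists_minimalFor_of_wellFoundedLT (· ∈ closure I)
    (fun v ↦ cs.length (v * x)) ⟨1, (closure I).one_mem⟩
  refine ⟨v⁻¹, (closure I).inv_mem hv, v * x, ?_, inv_mul_cancel_left v x⟩
  refine isLeftReduced_of_forall_length_le fun u hu ↦ le_of_not_gt fun h ↦ h.not_ge ?_
  rw [← mul_assoc] at h ⊢
  exact hmin ((closure I).mul_mem hu hv) h.le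

theorem IsLeftReduced.eq_one_of_mul_eq (hI : I ⊆ Set.range cs.simple) (hx : IsLeftReduced cs I x)
    (hy : IsLeftReduced cs I y) (hu : u ∈ closure I) (h : u * x = y) : u = 1 := by
  refine eq_one_of_forall_not_isLeftInversion hI hu fun s hs hinv ↦ ?_
  have hs' := mem_closure_of_mem hs
  exact hy s hs' (h ▸ (hx.isLeftInversion_mul_iff hu hs').2 hinv)

theorem isLeftReduced_iff (hI : I ⊆ Set.range cs.simple) :
    IsLeftReduced cs I x ↔ ∀ s ∈ I, ¬ cs.IsLeftInversion x s := by
  refine ⟨fun h s hs ↦ h s (mem_closure_of_mem hs), fun h ↦ ?_⟩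
  obtain ⟨u, hu, y, hy, rfl⟩ := exists_mul_isLeftReduced cs I x
  have hu1 : u = 1 := eq_one_of_forall_not_isLeftInversion hI hu fun s hs ↦ by
    rw [← hy.isLeftInversion_mul_iff hu (mem_closure_of_mem hs)]
    exact h s hs
  simpa [hu1] using hy

variable (cs) in
/-- `v` is the longest element of `W_I`: every reflection of `W_I` is an inversion. -/
structure IsLongest (I : Set W) (v : W) : Prop where
  mem : v ∈ closure I
  isLeftInversion : ∀ t ∈ closure I, cs.IsReflection t → cs.IsLeftInversion v t

theorem isLongest_of_forall_length_le (hv : v ∈ closure I)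
    (h : ∀ u ∈ closure I, cs.length u ≤ cs.length v) : IsLongest cs I v where
  mem := hv
  isLeftInversion _ ht hrefl :=
    ⟨hrefl, (h _ ((closure I).mul_mem ht hv)).lt_of_ne (hrefl.length_mul_right_ne v)⟩

variable (cs) in
theorem exists_isLongest (hfin : (closure I : Set W).Finite) : ∃ v, IsLongest cs I v := by
  obtain ⟨v, hv, hmax⟩ := hfin.exists_maximalFor cs.length _ ⟨1, (closure I).one_mem⟩
  exact ⟨v, isLongest_of_forall_length_le hv fun u hu ↦ le_of_not_gt fun h ↦
    h.not_ge (hmax hu h.le)⟩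

namespace IsLongest

theorem isLeftInversion_mul_iff (hv : IsLongest cs I v) (hu : u ∈ closure I) (ht : t ∈ closure I)
    (hrefl : cs.IsReflection t) : cs.IsLeftInversion (u * v) t ↔ ¬ cs.IsLeftInversion u t := by
  rw [LY.isLeftInversion_mul_iff hrefl, iff_true_right (hv.isLeftInversion _ (inv_conj_mem ht hu)
    (isReflection_inv_conj hrefl u))]

theorem length_mul (hI : I ⊆ Set.range cs.simple) (hv : IsLongest cs I v) (hu : u ∈ closure I) :
    cs.length (u * v) + cs.length u = cs.length v := by
  induction hu using closure_induction_length hI with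
  | one => simp
  | mul s u hs hu hdesc ih =>
    have hasc : cs.IsLeftInversion (u * v) s := by
      rw [hv.isLeftInversion_mul_iff hu (mem_closure_of_mem hs) hdesc.1,
        ← hdesc.1.isLeftInversion_mul_right_iff]
      exact hdesc
    have h := length_simple_mul_of_isLeftInversion (hI hs) hdesc
    have h' := length_simple_mul_of_isLeftInversion (hI hs) hasc
    rw [← mul_assoc, hdesc.1.mul_self, one_mul] at h
    rw [← mul_assoc] at h'
    lia

theorem eq_of_forall_isLeftInversion (hI : I ⊆ Set.range cs.simple) (hv : IsLongest cs I v)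
    (hw : w ∈ closure I) (h : ∀ s ∈ I, cs.IsLeftInversion w s) : w = v := by
  have hmem : w * v⁻¹ ∈ closure I := (closure I).mul_mem hw ((closure I).inv_mem hv.mem)
  refine mul_inv_eq_one.1 (eq_one_of_forall_not_isLeftInversion hI hmem fun s hs ↦ ?_)
  rw [← hv.isLeftInversion_mul_iff hmem (mem_closure_of_mem hs) (h s hs).1, inv_mul_cancel_right]
  exact h s hs

theorem unique (hI : I ⊆ Set.range cs.simple) (hv : IsLongest cs I v) (hw : IsLongest cs I w) :
    w = v :=
  hv.eq_of_forall_isLeftInversion hI hw.mem fun s hs ↦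
    hw.isLeftInversion s (mem_closure_of_mem hs) (isReflection_of_mem hI hs)

theorem inv_eq_self (hI : I ⊆ Set.range cs.simple) (hv : IsLongest cs I v) : v⁻¹ = v := by
  refine hv.unique hI ⟨(closure I).inv_mem hv.mem, fun t ht hrefl ↦ ?_⟩
  rw [isLeftInversion_inv_iff hrefl]
  exact hv.isLeftInversion _ ((closure I).mul_mem ((closure I).mul_mem hv.mem ht)
    ((closure I).inv_mem hv.mem)) (hrefl.conj v)

theorem mul_self (hI : I ⊆ Set.range cs.simple) (hv : IsLongest cs I v) : v * v = 1 :=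
  mul_eq_one_iff_eq_inv.2 (hv.inv_eq_self hI).symm

end IsLongest

end Parabolic

section DoubleCosets

open Subgroup

variable {B W : Type*} [Group W] {M : CoxeterMatrix B} {cs : CoxeterSystem M W}
variable {I J : Set W} {K : Subgroup W} {b s t u v w x y : W}

theorem mem_of_length_eq_one (hI : I ⊆ Set.range cs.simple) (hu : u ∈ closure I)
    (h : cs.length u = 1) : u ∈ I := by
  obtain ⟨i, rfl⟩ := cs.length_eq_one_iff.1 h
  obtain ⟨s, hs, hinv⟩ := exists_isLeftInversion_of_mem_closure hI hu fun h1 ↦ by simp [h1] at h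
  exact eq_simple_of_isLeftInversion hinv ▸ hs

theorem mem_closure_inter_of_forall_isLeftInversion (hI : I ⊆ Set.range cs.simple)
    (hu : u ∈ closure I) (h : ∀ t, cs.IsLeftInversion u t → t ∈ K) : u ∈ closure (I ∩ K) := by
  induction hu using closure_induction_length hI with
  | one => exact one_mem _
  | mul s u hs _ hdesc ih =>
    have hsK : s ∈ K := h s hdesc
    refine mul_mem (mem_closure_of_mem ⟨hs, hsK⟩) (ih fun t ht ↦ ?_)
    have hconj : s⁻¹ * (s * t * s⁻¹) * s = t := by group
    have hst := isLeftInversion_mul_iff (x := s) (y := u) (ht.1.conj s)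
    rw [hconj, iff_true_right ht] at hst
    by_cases hsinv : cs.IsLeftInversion s (s * t * s⁻¹)
    · obtain ⟨i, rfl⟩ := hI hs
      rw [← hconj, eq_simple_of_isLeftInversion hsinv, inv_mul_cancel, one_mul]
      exact hsK
    · exact hconj ▸ inv_conj_mem (h _ (hst.2 hsinv)) hsK

theorem IsLeftReduced.isLeftInversion_mul_left_iff (hb : IsLeftReduced cs I b) (ht : t ∈ closure I)
    (hrefl : cs.IsReflection t) :
    cs.IsLeftInversion (b * w) t ↔ cs.IsLeftInversion w (b⁻¹ * t * b) := by
  rw [LY.isLeftInversion_mul_iff hrefl, iff_false_left (hb t ht), not_not]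

theorem inv_conj_mem_of_mem_closure_inter_image_conj
    (hu : u ∈ closure (I ∩ (fun s ↦ b * s * b⁻¹) '' J)) : b⁻¹ * u * b ∈ closure J := by
  suffices h : closure (I ∩ (fun s ↦ b * s * b⁻¹) '' J) ≤
      (closure J).comap (MulAut.conj b⁻¹).toMonoidHom by simpa using h hu
  refine (closure_le _).2 ?_
  rintro _ ⟨-, s, hs, rfl⟩
  simpa [mul_assoc] using mem_closure_of_mem hs

theorem mem_closure_inter_image_conj (hI : I ⊆ Set.range cs.simple) (hJ : J ⊆ Set.range cs.simple)
    (hb : IsLeftReduced cs I b) (hb' : IsLeftReduced cs J b⁻¹) (hu : u ∈ closure I)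
    (h : ∀ t, cs.IsLeftInversion u t → b⁻¹ * t * b ∈ closure J) :
    u ∈ closure (I ∩ (fun s ↦ b * s * b⁻¹) '' J) := by
  have hu' := mem_closure_inter_of_forall_isLeftInversion
    (K := (closure J).comap (MulAut.conj b⁻¹).toMonoidHom) hI hu (by simpa using h)
  refine closure_mono ?_ hu'
  rintro s ⟨hs, hsK⟩
  have hr : b⁻¹ * s * b ∈ closure J := by simpa using hsK
  have hlen : cs.length (b⁻¹ * s * b) = cs.length s := by
    have h₁ := hb.length_mul hI (mem_closure_of_mem hs)
    have h₂ := hb'.length_mul hJ (inv_mem hr)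
    rw [← mul_inv_rev, cs.length_inv, cs.length_inv, cs.length_inv, ← mul_assoc, ← mul_assoc,
      mul_inv_cancel, one_mul] at h₂
    lia
  obtain ⟨i, rfl⟩ := hI hs
  exact ⟨hs, _, mem_of_length_eq_one hJ hr (hlen.trans (cs.length_simple i)), by group⟩

theorem IsLeftReduced.exists_eq_mul (hI : I ⊆ Set.range cs.simple) (hJ : J ⊆ Set.range cs.simple)
    (hb : IsLeftReduced cs I b) (hb' : IsLeftReduced cs J b⁻¹) (hx : IsLeftReduced cs J x⁻¹)
    (hu : u ∈ closure I) (hv : v ∈ closure J) (h : x = u * b * v) :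
    ∃ u' ∈ closure I, x = u' * b := by
  obtain ⟨p, hp, y, hy, hpy⟩ := exists_mul_isLeftReduced cs J (b⁻¹ * u⁻¹)
  have hpI : p ∈ closure (J ∩ (fun s ↦ b⁻¹ * s * b⁻¹⁻¹) '' I) := by
    refine mem_closure_inter_image_conj hJ hI hb' (by rwa [inv_inv]) hp fun t ht ↦ ?_
    have htJ := mem_closure_of_isLeftInversion hJ hp ht
    rw [← hy.isLeftInversion_mul_iff hp htJ, hpy, hb'.isLeftInversion_mul_left_iff htJ ht.1] at ht
    exact mem_closure_of_isLeftInversion hI (inv_mem hu) ht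
  have hvp : v⁻¹ * p = 1 := by
    refine hy.eq_one_of_mul_eq hJ hx (mul_mem (inv_mem hv) hp) ?_
    rw [mul_assoc, hpy, h]
    group
  have hpb := inv_conj_mem_of_mem_closure_inter_image_conj hpI
  refine ⟨u * (b⁻¹⁻¹ * p * b⁻¹), mul_mem hu hpb, ?_⟩
  rw [h, inv_mul_eq_one.1 hvp]
  group

theorem IsLongest.inter_image_conj (hI : I ⊆ Set.range cs.simple) (hJ : J ⊆ Set.range cs.simple)
    (hb : IsLeftReduced cs I b) (hb' : IsLeftReduced cs J b⁻¹) (hw : IsLongest cs J w)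
    (hv : v ∈ closure I) (hy : IsLeftReduced cs I y) (h : v * y = b * w) :
    IsLongest cs (I ∩ (fun s ↦ b * s * b⁻¹) '' J) v := by
  have hinv {t : W} (ht : t ∈ closure I) (hrefl : cs.IsReflection t) :
      cs.IsLeftInversion v t ↔ cs.IsLeftInversion w (b⁻¹ * t * b) := by
    rw [← hy.isLeftInversion_mul_iff hv ht, h, hb.isLeftInversion_mul_left_iff ht hrefl]
  refine ⟨mem_closure_inter_image_conj hI hJ hb hb' hv fun t ht ↦ ?_, fun t ht hrefl ↦ ?_⟩
  · exact mem_closure_of_isLeftInversion hJ hw.mem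
      ((hinv (mem_closure_of_isLeftInversion hI hv ht) ht.1).1 ht)
  · exact (hinv (closure_mono Set.inter_subset_left ht) hrefl).2 (hw.isLeftInversion _
      (inv_conj_mem_of_mem_closure_inter_image_conj ht) (isReflection_inv_conj hrefl b))

end DoubleCosets

/-! ### Euclidean reflection representations -/

/-- A representation of `W` on a rational vector space in which the finite parabolic subgroup `W_J`
acts by isometries and its reflections are orthogonal reflections, the walls of the chamber of `u`
(relative to the base point `base`) recording the inversions of `u ∈ W_J`. The vector `root t` is
only meaningful for reflections `t ∈ W_J`; it is pinned down up to a positive factor. -/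
structure EuclideanReflectionRep {B W : Type*} [Group W] {M : CoxeterMatrix B}
    (cs : CoxeterSystem M W) (J : Set W) (V : Type*) [AddCommGroup V] [Module ℚ V] where
  subset : J ⊆ Set.range cs.simple
  finite : (Subgroup.closure J : Set W).Finite
  rep : Representation ℚ W V
  form : LinearMap.BilinForm ℚ V
  form_comm : ∀ x y, form x y = form y x
  form_self_pos : ∀ x, x ≠ 0 → 0 < form x x
  form_rep_rep : ∀ u ∈ Subgroup.closure J, ∀ x y, form (rep u x) (rep u y) = form x y
  root : W → V
  rep_reflection : ∀ t ∈ Subgroup.closure J, cs.IsReflection t → ∀ x,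
    rep t x = x - (2 * form (root t) x / form (root t) (root t)) • root t
  base : V
  isLeftInversion_iff : ∀ t ∈ Subgroup.closure J, cs.IsReflection t → ∀ u ∈ Subgroup.closure J,
    (cs.IsLeftInversion u t ↔ form (root t) (rep u base) < 0)

namespace EuclideanReflectionRep

open Module Subgroup Submodule

variable {B W : Type*} [Group W] {M : CoxeterMatrix B} {cs : CoxeterSystem M W} {J : Set W}
variable {V : Type*} [AddCommGroup V] [Module ℚ V] (R : EuclideanReflectionRep cs J V)
variable {K L : Set W} {r s t u v w : W} {x y : V}

theorem rep_mul_apply (u v : W) (x : V) : R.rep (u * v) x = R.rep u (R.rep v x) := by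
  rw [map_mul, Module.End.mul_apply]

theorem form_rep_left (hu : u ∈ closure J) (x y : V) :
    R.form (R.rep u x) y = R.form x (R.rep u⁻¹ y) := by
  rw [← R.form_rep_rep u hu x, Representation.self_inv_apply]

theorem eq_zero_of_form_self_eq_zero (h : R.form x x = 0) : x = 0 := by
  by_contra hx
  exact (R.form_self_pos x hx).ne' h

section Reflection

variable (ht : t ∈ closure J) (hrefl : cs.IsReflection t)
include ht hrefl

theorem root_ne_zero : R.root t ≠ 0 := by
  intro h
  have hself : cs.IsLeftInversion t t := by
    simpa using hrefl.isLeftInversion_mul_right_iff.2 not_isLeftInversion_one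
  rw [R.isLeftInversion_iff t ht hrefl t ht] at hself
  simp [h] at hself

theorem form_root_self_pos : 0 < R.form (R.root t) (R.root t) :=
  R.form_self_pos _ (R.root_ne_zero ht hrefl)

theorem form_root_rep_self (x : V) : R.form (R.root t) (R.rep t x) = -R.form (R.root t) x := by
  have hpos := R.form_root_self_pos ht hrefl
  rw [R.rep_reflection t ht hrefl]
  simp only [map_sub, map_smul, smul_eq_mul]
  field_simp
  ring

theorem rep_root_self : R.rep t (R.root t) = -R.root t := by
  have hpos := R.form_root_self_pos ht hrefl
  rw [R.rep_reflection t ht hrefl, mul_div_assoc, div_self hpos.ne', mul_one]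
  module

theorem rep_eq_self_iff : R.rep t x = x ↔ R.form (R.root t) x = 0 := by
  have hpos := R.form_root_self_pos ht hrefl
  rw [R.rep_reflection t ht hrefl, sub_eq_self, smul_eq_zero]
  simp [R.root_ne_zero ht hrefl, hpos.ne']

theorem form_root_rep_base_pos_iff (hu : u ∈ closure J) :
    0 < R.form (R.root t) (R.rep u R.base) ↔ ¬ cs.IsLeftInversion u t := by
  rw [← hrefl.isLeftInversion_mul_right_iff,
    R.isLeftInversion_iff t ht hrefl _ ((closure J).mul_mem ht hu), rep_mul_apply,
    R.form_root_rep_self ht hrefl, neg_lt_zero]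

theorem form_root_base_pos : 0 < R.form (R.root t) R.base := by
  simpa using (R.form_root_rep_base_pos_iff ht hrefl (closure J).one_mem).2 not_isLeftInversion_one

theorem exists_rep_root (hu : u ∈ closure J) : ∃ c : ℚ, 0 < c ∧
    R.rep u (R.root (u⁻¹ * t * u)) = (if cs.IsLeftInversion u t then -c else c) • R.root t := by
  have ht' := inv_conj_mem ht hu
  have hrefl' := isReflection_inv_conj hrefl u
  set y := R.rep u (R.root (u⁻¹ * t * u)) with hy
  have hneg : R.rep t y = -y := by
    rw [hy, ← rep_mul_apply, show t * u = u * (u⁻¹ * t * u) by group, rep_mul_apply,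
      R.rep_root_self ht' hrefl', map_neg]
  obtain ⟨k, hk⟩ : ∃ k : ℚ, y = k • R.root t := by
    rw [R.rep_reflection t ht hrefl] at hneg
    refine ⟨R.form (R.root t) y / R.form (R.root t) (R.root t), ?_⟩
    rw [mul_div_assoc, mul_smul, sub_eq_iff_eq_add, ← sub_eq_iff_eq_add', sub_neg_eq_add,
      ← two_smul ℚ y] at hneg
    exact smul_right_injective V two_ne_zero hneg
  have hpos : 0 < k * R.form (R.root t) (R.rep u R.base) := by
    have h := R.form_root_base_pos ht' hrefl'
    rwa [← R.form_rep_rep u hu, ← hy, hk, map_smul, LinearMap.smul_apply, smul_eq_mul] at h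
  by_cases hinv : cs.IsLeftInversion u t
  · have hlt := (R.isLeftInversion_iff t ht hrefl u hu).1 hinv
    exact ⟨-k, neg_pos.2 (neg_of_mul_pos_left hpos hlt.le), by simpa [hinv] using hk⟩
  · have hgt := (R.form_root_rep_base_pos_iff ht hrefl hu).2 hinv
    exact ⟨k, pos_of_mul_pos_left hpos hgt.le, by simpa [hinv] using hk⟩

theorem exists_form_root_rep (hu : u ∈ closure J) (x : V) : ∃ c : ℚ, 0 < c ∧
    R.form (R.root t) (R.rep u x) =
      (if cs.IsLeftInversion u t then -c else c) * R.form (R.root (u⁻¹ * t * u)) x := by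
  obtain ⟨c, hc, hroot⟩ := R.exists_rep_root ht hrefl hu
  refine ⟨c⁻¹, inv_pos.2 hc, ?_⟩
  rw [← R.form_rep_rep u hu (R.root (u⁻¹ * t * u)), hroot, map_smul, LinearMap.smul_apply,
    smul_eq_mul, ← mul_assoc]
  split_ifs <;> field_simp

end Reflection

theorem form_root_rep_eq_zero_iff (ht : t ∈ closure J) (hrefl : cs.IsReflection t)
    (hu : u ∈ closure J) :
    R.form (R.root t) (R.rep u x) = 0 ↔ R.form (R.root (u⁻¹ * t * u)) x = 0 := by
  obtain ⟨c, hc, h⟩ := R.exists_form_root_rep ht hrefl hu x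
  rw [h, mul_eq_zero, or_iff_right]
  split_ifs <;> simp [hc.ne']

theorem eq_of_rep_eq (hu : u ∈ closure J) (hv : v ∈ closure J) (h : R.rep u = R.rep v) :
    u = v := by
  have huv := (closure J).mul_mem hu ((closure J).inv_mem hv)
  refine mul_inv_eq_one.1 (eq_one_of_forall_not_isLeftInversion R.subset huv fun s hs ↦ ?_)
  have hs' := subset_closure hs
  have hrefl := isReflection_of_mem R.subset hs
  rw [← R.form_root_rep_base_pos_iff hs' hrefl huv, rep_mul_apply, h, Representation.self_inv_apply]
  exact R.form_root_base_pos hs' hrefl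

theorem eq_of_root_eq_smul (hr : r ∈ closure J) (hr' : cs.IsReflection r) (ht : t ∈ closure J)
    (ht' : cs.IsReflection t) {c : ℚ} (h : R.root t = c • R.root r) : t = r := by
  have hc : c ≠ 0 := by
    rintro rfl
    exact R.root_ne_zero ht ht' (by simpa using h)
  have hpos := R.form_root_self_pos hr hr'
  refine R.eq_of_rep_eq ht hr (LinearMap.ext fun x ↦ ?_)
  rw [R.rep_reflection t ht ht', R.rep_reflection r hr hr', h]
  simp only [map_smul, LinearMap.smul_apply, smul_eq_mul, smul_smul]
  congr 2
  field_simp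

theorem form_root_root_eq_zero (hr : r ∈ closure J) (hr' : cs.IsReflection r) (ht : t ∈ closure J)
    (ht' : cs.IsReflection t) (hcomm : t * r = r * t) (hne : t ≠ r) :
    R.form (R.root t) (R.root r) = 0 := by
  have hconj : t⁻¹ * r * t = r := by rw [mul_assoc, ← hcomm, inv_mul_cancel_left]
  obtain ⟨c, -, h⟩ := R.exists_rep_root hr hr' ht
  rw [hconj, R.rep_reflection t ht ht', sub_eq_iff_eq_add', ← sub_eq_iff_eq_add] at h
  set k := if cs.IsLeftInversion t r then -c else c
  by_contra hform
  refine hne (R.eq_of_root_eq_smul hr hr' ht ht' (c := (1 - k) /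
    (2 * R.form (R.root t) (R.root r) / R.form (R.root t) (R.root t))) ?_)
  have hpos := R.form_root_self_pos ht ht'
  rw [div_eq_inv_mul, mul_smul, sub_smul, one_smul, h, inv_smul_smul₀]
  positivity

/-- `x` lies in the closed chamber of `W_L` cut out by its reflections. -/
def IsDominant (L : Set W) (x : V) : Prop :=
  ∀ t ∈ closure L, cs.IsReflection t → 0 ≤ R.form (R.root t) x

variable (hL : L ⊆ J)
include hL

theorem exists_isDominant (x : V) : ∃ v ∈ closure L, R.IsDominant L (R.rep v x) := by
  obtain ⟨v, hv, hmax⟩ := (R.finite.subset (closure_mono hL)).exists_maximalFor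
    (fun v ↦ R.form (R.rep v x) R.base) _ ⟨1, (closure L).one_mem⟩
  refine ⟨v, hv, fun t ht hrefl ↦ ?_⟩
  have htJ := closure_mono hL ht
  by_contra! hneg
  have hbase := R.form_root_base_pos htJ hrefl
  have hself := R.form_root_self_pos htJ hrefl
  have hlt : R.form (R.rep v x) R.base < R.form (R.rep (t * v) x) R.base := by
    rw [rep_mul_apply, R.rep_reflection t htJ hrefl]
    simp only [map_sub, map_smul, LinearMap.sub_apply, LinearMap.smul_apply, smul_eq_mul]
    exact lt_sub_iff_add_lt.2 (add_lt_of_neg_right _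
      (mul_neg_of_neg_of_pos (div_neg_of_neg_of_pos (by linarith) hself) hbase))
  exact hlt.not_ge (hmax ((closure L).mul_mem ht hv) hlt.le)

theorem eq_and_mem_closure_of_isDominant (hx : R.IsDominant L x) (hv : v ∈ closure L)
    (hvx : R.IsDominant L (R.rep v x)) :
    R.rep v x = x ∧ v ∈ closure {s ∈ L | R.form (R.root s) x = 0} := by
  induction hv using closure_induction_length (cs := cs) (hL.trans R.subset) with
  | one => exact ⟨by simp, one_mem _⟩
  | mul s u hs hu hdesc ih =>
    have hsJ := closure_mono hL (subset_closure hs)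
    have hsu := (closure L).mul_mem (subset_closure hs) hu
    have hzero : R.form (R.root s) (R.rep (s * u) x) = 0 := by
      obtain ⟨c, hc, h⟩ := R.exists_form_root_rep hsJ hdesc.1 (closure_mono hL hsu) x
      have hnonneg := hx _ (inv_conj_mem (subset_closure hs) hsu)
        (isReflection_inv_conj hdesc.1 _)
      refine le_antisymm ?_ (hvx s (subset_closure hs) hdesc.1)
      rw [h, if_pos hdesc]
      exact mul_nonpos_of_nonpos_of_nonneg (neg_nonpos.2 hc.le) hnonneg
    have hfix : R.rep (s * u) x = R.rep u x := by
      rw [← R.rep_eq_self_iff hsJ hdesc.1, ← rep_mul_apply, ← mul_assoc, hdesc.1.mul_self,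
        one_mul] at hzero
      exact hzero.symm
    obtain ⟨hux, hmem⟩ := ih (hfix ▸ hvx)
    rw [hfix, hux] at hzero
    exact ⟨hfix.trans hux, mul_mem (subset_closure ⟨hs, hzero⟩) hmem⟩

omit hL

/-- Every simple root of `W_K` is negated by `w`, so that `w` acts by `-1` on their span. -/
def NegatesRoots (K : Set W) (w : W) : Prop :=
  ∀ s ∈ K, R.rep w (R.root s) = -R.root s

/-- The dimension of the `(-1)`-eigenspace of `w`. -/
def negRank (w : W) : ℕ :=
  finrank ℚ (End.eigenspace (R.rep w) (-1))

theorem mem_eigenspace_neg_one_iff : x ∈ End.eigenspace (R.rep w) (-1) ↔ R.rep w x = -x := by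
  rw [End.mem_eigenspace_iff, neg_one_smul]

theorem NegatesRoots.isLongest {R : EuclideanReflectionRep cs J V} (h : R.NegatesRoots K w)
    (hK : K ⊆ J) (hw : w ∈ closure K) : IsLongest cs K w := by
  have hKS := hK.trans R.subset
  obtain ⟨v, hv⟩ := exists_isLongest cs (R.finite.subset (closure_mono hK))
  have hinv (s) (hs : s ∈ K) : cs.IsLeftInversion w⁻¹ s := by
    have hsJ := closure_mono hK (subset_closure hs)
    have hrefl := isReflection_of_mem hKS hs
    rw [R.isLeftInversion_iff s hsJ hrefl _ (inv_mem (closure_mono hK hw)),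
      ← R.form_rep_left (closure_mono hK hw), h s hs, map_neg, LinearMap.neg_apply, neg_lt_zero]
    exact R.form_root_base_pos hsJ hrefl
  have hwv := hv.eq_of_forall_isLeftInversion hKS (inv_mem hw) hinv
  rwa [← inv_inv w, hwv, hv.inv_eq_self hKS]

theorem rep_eq_neg_of_orthogonal (hw : w ∈ closure J) (hww : w * w = 1)
    (hx : ∀ y, R.rep w y = y → R.form x y = 0) : R.rep w x = -x := by
  have hinv : w⁻¹ = w := inv_eq_of_mul_eq_one_left hww
  have hfix : R.rep w (x + R.rep w x) = x + R.rep w x := by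
    rw [map_add, ← rep_mul_apply, hww, map_one, Module.End.one_apply, add_comm]
  refine (neg_eq_of_add_eq_zero_right (R.eq_zero_of_form_self_eq_zero ?_)).symm
  rw [R.form.map_add x, LinearMap.add_apply, R.form_rep_left hw, hinv, hfix, hx _ hfix, add_zero]

theorem exists_fixed_forall_root (w : W) : ∃ y, R.rep w y = y ∧ ∀ t ∈ closure J,
    R.form (R.root t) y = 0 → ∀ x, R.rep w x = x → R.form (R.root t) x = 0 := by
  have := R.finite.to_subtype
  let E := End.eigenspace (R.rep w) 1
  have hE (x) : x ∈ E ↔ R.rep w x = x := by rw [End.mem_eigenspace_iff, one_smul]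
  let f (t : {t : closure J // (R.form (R.root t)).domRestrict E ≠ 0}) : Dual ℚ E :=
    (R.form (R.root t)).domRestrict E
  obtain ⟨y, hy⟩ := Dual.exists_forall_ne_zero_of_forall_exists f
    fun t ↦ DFunLike.ne_iff.1 t.2
  refine ⟨y, (hE y).1 y.2, fun t ht hty x hx ↦ ?_⟩
  by_contra hne
  exact hy ⟨⟨t, ht⟩, fun h ↦ hne (LinearMap.congr_fun h ⟨x, (hE x).2 hx⟩)⟩ hty

include hL in
/-- Moving a generic fixed vector `y` of the involution `w` into the dominant chamber makes `w`
the longest element of the stabilizer of `y`, and central there: it acts by `-1` on the roots. -/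
theorem exists_isDominant_fixed (hw : w ∈ closure L) (hww : w * w = 1) :
    ∃ g ∈ closure L, ∃ y, R.rep w y = y ∧ R.IsDominant L (R.rep g y) ∧
      g * w * g⁻¹ ∈ closure {s ∈ L | R.form (R.root s) (R.rep g y) = 0} ∧
      R.NegatesRoots {s ∈ L | R.form (R.root s) (R.rep g y) = 0} (g * w * g⁻¹) := by
  obtain ⟨y, hwy, hgen⟩ := R.exists_fixed_forall_root w
  obtain ⟨g, hg, hdom⟩ := R.exists_isDominant hL y
  have hw' : g * w * g⁻¹ ∈ closure L := mul_mem (mul_mem hg hw) (inv_mem hg)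
  have hfix : R.rep (g * w * g⁻¹) (R.rep g y) = R.rep g y := by
    rw [← rep_mul_apply, inv_mul_cancel_right, rep_mul_apply, hwy]
  refine ⟨g, hg, y, hwy, hdom, ?_, fun s ⟨hs, hzero⟩ ↦ ?_⟩
  · exact (R.eq_and_mem_closure_of_isDominant hL hdom hw' (hfix.symm ▸ hdom)).2
  have hgJ := closure_mono hL hg
  have hsJ := closure_mono hL (subset_closure hs)
  have hrefl := isReflection_of_mem R.subset (hL hs)
  have hinvol : g * w * g⁻¹ * (g * w * g⁻¹) = 1 := by
    rw [conj_mul, hww, mul_one, mul_inv_cancel]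
  refine R.rep_eq_neg_of_orthogonal (closure_mono hL hw') hinvol fun x hx ↦ ?_
  rw [← R.rep.self_inv_apply g x, R.form_root_rep_eq_zero_iff hsJ hrefl hgJ]
  refine hgen _ (inv_conj_mem hsJ hgJ) ((R.form_root_rep_eq_zero_iff hsJ hrefl hgJ).1 hzero) _ ?_
  rw [← rep_mul_apply, show w * g⁻¹ = g⁻¹ * (g * w * g⁻¹) by group, rep_mul_apply, hx]

theorem rep_sub_self_mem_span (hL : L ⊆ J) (hu : u ∈ closure L) (x : V) :
    R.rep u x - x ∈ span ℚ (R.root '' L) := by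
  induction hu using Subgroup.closure_induction generalizing x with
  | mem s hs =>
    rw [R.rep_reflection s (subset_closure (hL hs)) (isReflection_of_mem R.subset (hL hs)),
      sub_sub_cancel_left]
    exact neg_mem (smul_mem _ _ (Submodule.subset_span ⟨s, hs, rfl⟩))
  | one => simp
  | mul u v _ _ hu hv =>
    rw [rep_mul_apply, ← sub_add_sub_cancel]
    exact add_mem (hu _) (hv x)
  | inv u _ hu =>
    have h := neg_mem (hu (R.rep u⁻¹ x))
    rwa [Representation.self_inv_apply, neg_sub] at h

theorem eigenspace_neg_one_le_span (hL : L ⊆ J) (hw : w ∈ closure L) :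
    End.eigenspace (R.rep w) (-1) ≤ span ℚ (R.root '' L) := by
  intro x hx
  have h := R.rep_sub_self_mem_span hL hw x
  rw [R.mem_eigenspace_neg_one_iff.1 hx, ← neg_add', ← two_smul ℚ, neg_mem_iff] at h
  exact (smul_mem_iff _ two_ne_zero).1 h

/-- The sum of the orbit of the base point under `W_{L ∖ {s}}` lies on the walls of all simple
reflections of `L` other than `s`. -/
theorem exists_form_root_pos (hL : L ⊆ J) (hs : s ∈ L) :
    ∃ x, 0 < R.form (R.root s) x ∧ ∀ r ∈ L, r ≠ s → R.form (R.root r) x = 0 := by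
  have hLs : L \ {s} ⊆ J := Set.sdiff_subset.trans hL
  have hfin := R.finite.subset (closure_mono hLs)
  have hmem {u} (hu : u ∈ hfin.toFinset) : u ∈ closure J :=
    closure_mono hLs (hfin.mem_toFinset.1 hu)
  have hsJ := subset_closure (hL hs)
  have hs' := isReflection_of_mem R.subset (hL hs)
  refine ⟨∑ u ∈ hfin.toFinset, R.rep u R.base, ?_, fun r hr hne ↦ ?_⟩
  · rw [map_sum]
    refine Finset.sum_pos (fun u hu ↦ ?_) ⟨1, hfin.mem_toFinset.2 (one_mem _)⟩
    refine (R.form_root_rep_base_pos_iff hsJ hs' (hmem hu)).2 fun hinv ↦ ?_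
    have hsub := hLs.trans R.subset
    obtain ⟨i, rfl⟩ := R.subset (hL hs)
    obtain ⟨r, hr, hri⟩ := exists_isLeftInversion_of_mem_closure (cs := cs) hsub
      (mem_closure_of_isLeftInversion hsub (hfin.mem_toFinset.1 hu) hinv)
      fun h ↦ by simpa [h] using cs.length_simple i
    exact hr.2 (eq_simple_of_isLeftInversion hri)
  · have hrJ := subset_closure (hL hr)
    rw [← R.rep_eq_self_iff hrJ (isReflection_of_mem R.subset (hL hr)), map_sum]
    have hrLs : r ∈ closure (L \ {s}) := subset_closure ⟨hr, hne⟩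
    refine Finset.sum_bijective (r * ·) (Equiv.mulLeft r).bijective (fun u ↦ ?_) fun u _ ↦
      (R.rep_mul_apply ..).symm
    simp only [Set.Finite.mem_toFinset, SetLike.mem_coe, Subgroup.mul_mem_cancel_left _ hrLs]

theorem linearIndependent_root (hL : L ⊆ J) : LinearIndependent ℚ fun s : L ↦ R.root s := by
  choose x hpos hzero using fun s : L ↦ R.exists_form_root_pos hL s.2
  refine .of_pairwise_dual_eq_zero_one _
    (fun s ↦ (R.form (R.root s) (x s))⁻¹ • R.form (x s)) (fun r s hne ↦ ?_) fun s ↦ ?_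
  · simp [R.form_comm (x _), hzero _ _ (Subtype.prop _) (Subtype.coe_ne_coe.2 hne.symm)]
  · simp [R.form_comm (x _), (hpos s).ne']

theorem finrank_span_root (hL : L ⊆ J) : finrank ℚ (span ℚ (R.root '' L)) = L.ncard := by
  have := (R.finite.subset (hL.trans subset_closure)).fintype
  rw [Set.image_eq_range, finrank_span_eq_card (R.linearIndependent_root hL),
    Set.ncard_eq_toFinset_card', Set.toFinset_card]

theorem NegatesRoots.negRank {R : EuclideanReflectionRep cs J V} (h : R.NegatesRoots L w)
    (hL : L ⊆ J) (hw : w ∈ closure L) : R.negRank w = L.ncard := by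
  rw [← R.finrank_span_root hL, EuclideanReflectionRep.negRank,
    (R.eigenspace_neg_one_le_span hL hw).antisymm (span_le.2 ?_)]
  rintro _ ⟨s, hs, rfl⟩
  exact R.mem_eigenspace_neg_one_iff.2 (h s hs)

theorem NegatesRoots.mul_comm {R : EuclideanReflectionRep cs J V} (h : R.NegatesRoots L w)
    (hL : L ⊆ J) (hw : w ∈ closure J) (hs : s ∈ L) : w * s = s * w := by
  have hsJ := subset_closure (hL hs)
  have hrefl := isReflection_of_mem R.subset (hL hs)
  obtain ⟨c, -, hc⟩ := R.exists_rep_root hsJ hrefl hw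
  rw [← neg_neg (R.root s), ← h s hs, ← map_neg, ← map_smul] at hc
  replace hc := congrArg (R.rep w⁻¹) hc
  rw [Representation.inv_self_apply, Representation.inv_self_apply, smul_neg, ← neg_smul] at hc
  have hconj := R.eq_of_root_eq_smul hsJ hrefl (inv_conj_mem hsJ hw)
    (isReflection_inv_conj hrefl w) hc
  rw [mul_assoc, inv_mul_eq_iff_eq_mul] at hconj
  exact hconj.symm

section FiniteDimensional

variable [FiniteDimensional ℚ V]

theorem negRank_le_of_forall (h : ∀ x, R.rep v x = -x → R.rep w (R.rep u x) = -R.rep u x) :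
    R.negRank v ≤ R.negRank w := by
  have hmaps : ∀ x ∈ End.eigenspace (R.rep v) (-1), R.rep u x ∈ End.eigenspace (R.rep w) (-1) :=
    fun x hx ↦ R.mem_eigenspace_neg_one_iff.2 (h x (R.mem_eigenspace_neg_one_iff.1 hx))
  refine LinearMap.finrank_le_finrank_of_injective (f := (R.rep u).restrict hmaps) ?_
  intro x y hxy
  have hxy' := congrArg (R.rep u⁻¹) (congrArg Subtype.val hxy)
  simpa [Representation.inv_self_apply] using hxy'

theorem negRank_conj (u w : W) : R.negRank (u * w * u⁻¹) = R.negRank w := by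
  refine le_antisymm (R.negRank_le_of_forall (u := u⁻¹) fun x hx ↦ ?_)
    (R.negRank_le_of_forall (u := u) fun x hx ↦ ?_)
  · rw [← map_neg, ← hx, ← rep_mul_apply, ← rep_mul_apply, mul_assoc u, inv_mul_cancel_left]
  · rw [← rep_mul_apply, inv_mul_cancel_right, rep_mul_apply, hx, map_neg]

theorem negRank_le_negRank_mul_add_one (hs : s ∈ closure J) (hrefl : cs.IsReflection s) (w : W) :
    R.negRank w ≤ R.negRank (w * s) + 1 := by
  have hle : End.eigenspace (R.rep w) (-1) ⊓ (R.form (R.root s)).ker ≤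
      End.eigenspace (R.rep (w * s)) (-1) := fun x ⟨hx, hsx⟩ ↦ by
    rw [R.mem_eigenspace_neg_one_iff, rep_mul_apply, (R.rep_eq_self_iff hs hrefl).2 hsx,
      R.mem_eigenspace_neg_one_iff.1 hx]
  have hrange : finrank ℚ (R.form (R.root s)).range ≤ 1 := by
    simpa using (R.form (R.root s)).range.finrank_le
  have hker := (R.form (R.root s)).finrank_range_add_finrank_ker
  have hsup := (End.eigenspace (R.rep w) (-1) ⊔ (R.form (R.root s)).ker).finrank_le
  have hinf := finrank_sup_add_finrank_inf_eq (End.eigenspace (R.rep w) (-1))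
    (R.form (R.root s)).ker
  have hmono := finrank_mono hle
  unfold negRank
  lia

end FiniteDimensional

theorem rep_eq_neg_of_isDominant (hL : L ⊆ J) (hw : IsLongest cs L w) (hv : v ∈ closure L)
    (hdom : R.IsDominant L x) (hvx : R.rep v x = -x) : R.rep w x = -x := by
  have hwJ := closure_mono hL hw.mem
  have hdom' : R.IsDominant L (R.rep (w * v) x) := by
    intro t ht hrefl
    obtain ⟨c, hc, h⟩ := R.exists_form_root_rep (closure_mono hL ht) hrefl hwJ x
    rw [rep_mul_apply, hvx, map_neg, map_neg, h, if_pos (hw.isLeftInversion t ht hrefl), neg_mul,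
      neg_neg]
    exact mul_nonneg hc.le (hdom _ (inv_conj_mem ht hw.mem) (isReflection_inv_conj hrefl w))
  have heq := (R.eq_and_mem_closure_of_isDominant hL hdom (mul_mem hw.mem hv) hdom').1
  rw [rep_mul_apply, hvx, map_neg] at heq
  rw [← heq, neg_neg, heq]

/-- Every `(-1)`-eigenvector of `v` is moved by some `u ∈ W_L` into the dominant chamber, where the
longest element negates it; finitely many subspaces cover the eigenspace, so one `u` serves all. -/
theorem exists_forall_rep_eq_neg (hL : L ⊆ J) (hw : IsLongest cs L w) (hv : v ∈ closure L) :
    ∃ u ∈ closure L, ∀ x, R.rep v x = -x → R.rep w (R.rep u x) = -R.rep u x := by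
  have := (R.finite.subset (closure_mono hL)).to_subtype
  let E := End.eigenspace (R.rep v) (-1)
  let p (u : closure L) : Subspace ℚ E :=
    (End.eigenspace (R.rep w) (-1)).comap ((R.rep u).comp E.subtype)
  obtain ⟨u, hu⟩ : ∃ u, p u = ⊤ := by
    refine Subspace.exists_eq_top_of_iUnion_eq_univ (Set.eq_univ_of_forall fun x ↦ ?_)
    obtain ⟨u, hu, hdom⟩ := R.exists_isDominant hL (x : V)
    refine Set.mem_iUnion.2 ⟨⟨u, hu⟩, R.mem_eigenspace_neg_one_iff.2 ?_⟩
    change R.rep w (R.rep u x) = -R.rep u x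
    refine R.rep_eq_neg_of_isDominant hL hw (mul_mem (mul_mem hu hv) (inv_mem hu)) hdom ?_
    rw [← rep_mul_apply, inv_mul_cancel_right, rep_mul_apply,
      R.mem_eigenspace_neg_one_iff.1 x.2, map_neg]
  refine ⟨u, u.2, fun x hx ↦ ?_⟩
  have hxu : (⟨x, R.mem_eigenspace_neg_one_iff.2 hx⟩ : E) ∈ p u := hu ▸ mem_top
  exact R.mem_eigenspace_neg_one_iff.1 hxu

theorem exists_conj_forall_fixed (hL : L ⊆ J) (hw : IsLongest cs L w) (hv : v ∈ closure L)
    (hvv : v * v = 1) :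
    ∃ u ∈ closure L, ∀ y, R.rep w y = y → R.rep (u * v * u⁻¹) y = y := by
  obtain ⟨u, hu, hneg⟩ := R.exists_forall_rep_eq_neg hL hw hv
  refine ⟨u, hu, fun y hy ↦ ?_⟩
  have hv' : u * v * u⁻¹ ∈ closure J := closure_mono hL (mul_mem (mul_mem hu hv) (inv_mem hu))
  have hvv' : u * v * u⁻¹ * (u * v * u⁻¹) = 1 := by rw [conj_mul, hvv, mul_one, mul_inv_cancel]
  set z := y - R.rep (u * v * u⁻¹) y with hz
  have hvz : R.rep (u * v * u⁻¹) z = -z := by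
    rw [hz, map_sub, ← rep_mul_apply, hvv', map_one, End.one_apply, neg_sub]
  have hwz : R.rep w z = -z := by
    have h := congrArg (R.rep u⁻¹) hvz
    rw [← rep_mul_apply, map_neg, mul_assoc u, inv_mul_cancel_left, rep_mul_apply] at h
    rw [← R.rep.self_inv_apply u z, hneg _ h]
  have hzy : R.form z y = 0 := by
    have h := R.form_rep_rep w (closure_mono hL hw.mem) z y
    rw [hwz, hy, map_neg, LinearMap.neg_apply] at h
    linarith
  have hzv : R.form z (R.rep (u * v * u⁻¹) y) = 0 := by
    have h := R.form_rep_rep _ hv' z y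
    rwa [hvz, map_neg, LinearMap.neg_apply, hzy, neg_eq_zero] at h
  have hzz : R.form z z = 0 := by
    conv_lhs => rw [hz, map_sub, ← hz, hzy, hzv, sub_zero]
  exact (sub_eq_zero.1 (R.eq_zero_of_form_self_eq_zero hzz)).symm

end EuclideanReflectionRep

/-! ### Signed sums over orbits -/

section Conjugation

variable {B W : Type*} [Group W] {M : CoxeterMatrix B} {cs : CoxeterSystem M W} {r t : W}

theorem inv_conj_eq_self_iff : r⁻¹ * t * r = r ↔ t = r := by
  rw [mul_assoc, inv_mul_eq_iff_eq_mul, mul_left_inj]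

theorem inv_conj_inv_conj (hr : cs.IsReflection r) (t : W) :
    r⁻¹ * (r⁻¹ * t * r) * r = t := by
  rw [show r⁻¹ * (r⁻¹ * t * r) * r = (r * r)⁻¹ * t * (r * r) by group, hr.mul_self]
  simp

end Conjugation

namespace EuclideanReflectionRep

open Module Subgroup

variable {B W : Type*} [Group W] {M : CoxeterMatrix B} {cs : CoxeterSystem M W} {J : Set W}
variable {V : Type*} [AddCommGroup V] [Module ℚ V] (R : EuclideanReflectionRep cs J V)
variable {r t u : W} {x : V}

theorem rep_eq_self_of_mem_closure {S : Set W} {v : W} (h : ∀ t ∈ S, R.rep t x = x)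
    (hv : v ∈ closure S) : R.rep v x = x := by
  induction hv using closure_induction with
  | mem t ht => exact h t ht
  | one => simp
  | mul u v _ _ hu hv => rw [rep_mul_apply, hv, hu]
  | inv u _ hu => rw [← hu, Representation.inv_self_apply, hu]

/-- The sign telling on which side of the wall of `t` the point `x` lies, points of the wall being
counted as positive. -/
def wallSign (t : W) (x : V) : ℤ :=
  if R.form (R.root t) x < 0 then -1 else 1

theorem wallSign_mul_self (t : W) (x : V) : R.wallSign t x * R.wallSign t x = 1 := by
  unfold wallSign
  split_ifs <;> norm_num

theorem wallSign_of_form_eq_zero (h : R.form (R.root t) x = 0) : R.wallSign t x = 1 := by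
  rw [wallSign, if_neg h.not_lt]

theorem wallSign_rep (ht : t ∈ closure J) (hrefl : cs.IsReflection t) (hu : u ∈ closure J)
    (hinv : ¬ cs.IsLeftInversion u t) (x : V) :
    R.wallSign t (R.rep u x) = R.wallSign (u⁻¹ * t * u) x := by
  obtain ⟨c, hc, h⟩ := R.exists_form_root_rep ht hrefl hu x
  rw [if_neg hinv] at h
  simp only [wallSign, h, ← not_le, mul_nonneg_iff_of_pos_left hc]

theorem wallSign_rep_self (ht : t ∈ closure J) (hrefl : cs.IsReflection t)
    (hx : R.form (R.root t) x ≠ 0) : R.wallSign t (R.rep t x) = -R.wallSign t x := by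
  rw [wallSign, wallSign, R.form_root_rep_self ht hrefl]
  rcases hx.lt_or_gt with h | h
  · rw [if_neg (by linarith), if_pos h, neg_neg]
  · rw [if_pos (by linarith), if_neg h.not_gt]

theorem form_root_root_sq_lt (hr : r ∈ closure J) (hr' : cs.IsReflection r) (ht : t ∈ closure J)
    (ht' : cs.IsReflection t) (hne : t ≠ r) :
    R.form (R.root t) (R.root r) ^ 2 <
      R.form (R.root t) (R.root t) * R.form (R.root r) (R.root r) := by
  have hpos := R.form_root_self_pos hr hr'
  set a := R.root t
  set b := R.root r
  have hab : R.form b b • a - R.form a b • b ≠ 0 := fun h ↦ by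
    refine hne (R.eq_of_root_eq_smul hr hr' ht ht' (c := (R.form b b)⁻¹ * R.form a b) ?_)
    rw [mul_smul, ← sub_eq_zero.1 h, inv_smul_smul₀ hpos.ne']
  have h := R.form_self_pos _ hab
  simp only [map_sub, map_smul, LinearMap.sub_apply, LinearMap.smul_apply, smul_eq_mul,
    R.form_comm b a] at h
  have : 0 < R.form b b * (R.form a a * R.form b b - R.form a b ^ 2) := by linarith
  linarith [pos_of_mul_pos_right this hpos.le]

theorem form_root_eq_zero_and_rep_eq_self (hr : r ∈ closure J) (hrefl : cs.IsReflection r)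
    (hu : u ∈ closure J) (hur : R.rep u (R.root r) = R.root r) (h : R.rep (r * u) x = x) :
    R.form (R.root r) x = 0 ∧ R.rep u x = x := by
  have hux : R.rep u x = R.rep r x := by
    have := congrArg (R.rep r) h
    rwa [← rep_mul_apply, ← mul_assoc, hrefl.mul_self, one_mul] at this
  have hwall : R.form (R.root r) x = 0 := by
    have := R.form_rep_rep u hu (R.root r) x
    rw [hur, hux, R.form_root_rep_self hr hrefl] at this
    linarith
  exact ⟨hwall, by rw [hux, R.rep_eq_self_iff hr hrefl, hwall]⟩

/-- A finite set of reflections of `W_J` stable under conjugation by its members, such as the set of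
all reflections of a parabolic subgroup or of the centralizer of a reflection in it. -/
structure IsReflectionSystem (cs : CoxeterSystem M W) (J : Set W) (T : Finset W) : Prop where
  mem : ∀ t ∈ T, t ∈ closure J
  isReflection : ∀ t ∈ T, cs.IsReflection t
  inv_conj_mem : ∀ r ∈ T, ∀ t ∈ T, r⁻¹ * t * r ∈ T

namespace IsReflectionSystem

variable {R} {T : Finset W} (hT : IsReflectionSystem cs J T)
include hT

theorem closure_le_closure : closure (T : Set W) ≤ closure J :=
  (closure_le _).2 hT.mem

/-- If the wall of `r` is closest to the base point, then projecting the base point to it crosses no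
other wall. -/
theorem form_root_sub_pos (hr : r ∈ T) (ht : t ∈ T) (hne : t ≠ r)
    (hmin : R.form (R.root r) R.base ^ 2 / R.form (R.root r) (R.root r) ≤
      R.form (R.root t) R.base ^ 2 / R.form (R.root t) (R.root t)) :
    0 < R.form (R.root t)
      (R.base - (R.form (R.root r) R.base / R.form (R.root r) (R.root r)) • R.root r) := by
  have hrr := R.form_root_self_pos (hT.mem r hr) (hT.isReflection r hr)
  have htt := R.form_root_self_pos (hT.mem t ht) (hT.isReflection t ht)
  have hrb := R.form_root_base_pos (hT.mem r hr) (hT.isReflection r hr)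
  have htb := R.form_root_base_pos (hT.mem t ht) (hT.isReflection t ht)
  have hCS := R.form_root_root_sq_lt (hT.mem r hr) (hT.isReflection r hr) (hT.mem t ht)
    (hT.isReflection t ht) hne
  rw [map_sub, map_smul, smul_eq_mul, sub_pos]
  refine lt_of_pow_lt_pow_left₀ 2 htb.le ?_
  rw [div_le_div_iff₀ hrr htt] at hmin
  rw [mul_pow, div_pow, div_mul_eq_mul_div, div_lt_iff₀ (by positivity)]
  have hrb2 := mul_lt_mul_of_pos_left hCS (pow_pos hrb 2)
  nlinarith [mul_le_mul_of_nonneg_right hmin hrr.le]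

theorem exists_forall_not_isLeftInversion (R : EuclideanReflectionRep cs J V)
    (hne : T.Nonempty) : ∃ r ∈ T, ∀ t ∈ T, t ≠ r → ¬ cs.IsLeftInversion r t := by
  obtain ⟨r, hr, hmin⟩ := T.exists_min_image
    (fun t ↦ R.form (R.root t) R.base ^ 2 / R.form (R.root t) (R.root t)) hne
  refine ⟨r, hr, fun t ht htr hinv ↦ ?_⟩
  have hrJ := hT.mem r hr
  have hr' := hT.isReflection r hr
  set z := R.base - (R.form (R.root r) R.base / R.form (R.root r) (R.root r)) • R.root r
  have hz {t} (ht : t ∈ T) (htr : t ≠ r) : 0 < R.form (R.root t) z :=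
    hT.form_root_sub_pos hr ht htr (hmin t ht)
  have hrz : R.rep r z = z := by
    have hrr := R.form_root_self_pos hrJ hr'
    rw [R.rep_eq_self_iff hrJ hr', map_sub, map_smul, smul_eq_mul]
    field_simp
    ring
  obtain ⟨c, hc, h⟩ := R.exists_form_root_rep (hT.mem t ht) (hT.isReflection t ht) hrJ z
  have htr' : r⁻¹ * t * r ≠ r := mt inv_conj_eq_self_iff.1 htr
  rw [if_pos hinv, hrz] at h
  have := mul_pos hc (hz (hT.inv_conj_mem r hr t ht) htr')
  linarith [hz ht htr]

variable (hr : r ∈ T) (hrT : ∀ t ∈ T, t ≠ r → ¬ cs.IsLeftInversion r t)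
include hr hrT

theorem prod_wallSign_rep (hx : R.form (R.root r) x ≠ 0) :
    ∏ t ∈ T, R.wallSign t (R.rep r x) = -∏ t ∈ T, R.wallSign t x := by
  have hrr := hT.isReflection r hr
  have hconj {t} (ht : t ∈ T.erase r) : r⁻¹ * t * r ∈ T.erase r :=
    Finset.mem_erase.2 ⟨mt inv_conj_eq_self_iff.1 (Finset.ne_of_mem_erase ht),
      hT.inv_conj_mem r hr t (Finset.mem_of_mem_erase ht)⟩
  rw [← Finset.mul_prod_erase T _ hr, ← Finset.mul_prod_erase T _ hr,
    R.wallSign_rep_self (hT.mem r hr) hrr hx, neg_mul]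
  congr 2
  refine Finset.prod_bij' (fun t _ ↦ r⁻¹ * t * r) (fun t _ ↦ r⁻¹ * t * r) (fun t ht ↦ hconj ht)
    (fun t ht ↦ hconj ht) (fun t _ ↦ inv_conj_inv_conj hrr t)
    (fun t _ ↦ inv_conj_inv_conj hrr t) fun t ht ↦ ?_
  obtain ⟨htr, ht⟩ := Finset.mem_erase.1 ht
  exact R.wallSign_rep (hT.mem t ht) (hT.isReflection t ht) (hT.mem r hr) (hrT t ht htr) x

theorem prod_wallSign_of_form_eq_zero (hx : R.form (R.root r) x = 0) :
    ∏ t ∈ T, R.wallSign t x = ∏ t ∈ T with t ≠ r ∧ t * r = r * t, R.wallSign t x := by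
  have hrr := hT.isReflection r hr
  have hrx := (R.rep_eq_self_iff (hT.mem r hr) hrr).2 hx
  rw [← Finset.prod_filter_mul_prod_filter_not T (fun t ↦ t ≠ r ∧ t * r = r * t),
    mul_eq_left₀ (Finset.prod_ne_zero_iff.2 fun t _ ↦ left_ne_zero_of_mul_eq_one
      (R.wallSign_mul_self t x))]
  have hsign {t} (ht : t ∈ T) (htr : t ≠ r) : R.wallSign (r⁻¹ * t * r) x = R.wallSign t x := by
    rw [← R.wallSign_rep (hT.mem t ht) (hT.isReflection t ht) (hT.mem r hr) (hrT t ht htr), hrx]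
  refine Finset.prod_involution (fun t _ ↦ r⁻¹ * t * r) (fun t ht ↦ ?_) (fun t ht hne h ↦ ?_)
    (fun t ht ↦ ?_) (fun t _ ↦ inv_conj_inv_conj hrr t)
  · rcases eq_or_ne t r with rfl | htr
    · rw [inv_mul_cancel, one_mul, wallSign_mul_self]
    · rw [hsign (Finset.mem_filter.1 ht).1 htr, wallSign_mul_self]
  · obtain ⟨-, hfilter⟩ := Finset.mem_filter.1 ht
    refine hfilter ⟨fun htr ↦ hne (htr ▸ R.wallSign_of_form_eq_zero hx), ?_⟩
    rwa [mul_assoc, inv_mul_eq_iff_eq_mul] at h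
  · obtain ⟨htT, hfilter⟩ := Finset.mem_filter.1 ht
    refine Finset.mem_filter.2 ⟨hT.inv_conj_mem r hr t htT, fun ⟨hne, hcomm⟩ ↦ hfilter ⟨?_, ?_⟩⟩
    · exact fun htr ↦ hne (inv_conj_eq_self_iff.2 htr)
    · rw [← mul_assoc, ← mul_assoc, mul_inv_cancel, one_mul] at hcomm
      have hconj := mul_right_cancel hcomm
      rwa [mul_assoc, inv_mul_eq_iff_eq_mul] at hconj

theorem sum_prod_wallSign {X : Finset V} (hX : ∀ x ∈ X, R.rep r x ∈ X) :
    ∑ x ∈ X, ∏ t ∈ T, R.wallSign t x = ∑ x ∈ X with R.form (R.root r) x = 0,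
      ∏ t ∈ T with t ≠ r ∧ t * r = r * t, R.wallSign t x := by
  have hrJ := hT.mem r hr
  have hrr := hT.isReflection r hr
  have hinvol (x : V) : R.rep r (R.rep r x) = x := by
    rw [← rep_mul_apply, hrr.mul_self, map_one, End.one_apply]
  rw [← Finset.sum_filter_add_sum_filter_not X (fun x ↦ R.form (R.root r) x = 0),
    Finset.sum_congr rfl fun x hx ↦
      hT.prod_wallSign_of_form_eq_zero hr hrT (Finset.mem_filter.1 hx).2, add_eq_left]
  have hmem {x} (hx : x ∈ X.filter (¬ R.form (R.root r) · = 0)) :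
      R.rep r x ∈ X.filter (¬ R.form (R.root r) · = 0) := by
    obtain ⟨hx, hne⟩ := Finset.mem_filter.1 hx
    exact Finset.mem_filter.2 ⟨hX x hx, by rwa [R.form_root_rep_self hrJ hrr, neg_eq_zero]⟩
  refine Finset.sum_involution (fun x _ ↦ R.rep r x) (fun x hx ↦ ?_) (fun x hx _ h ↦ ?_)
    (fun x hx ↦ hmem hx) (fun x _ ↦ hinvol x)
  · rw [hT.prod_wallSign_rep hr hrT (Finset.mem_filter.1 hx).2, add_neg_cancel]
  · exact (Finset.mem_filter.1 hx).2 ((R.rep_eq_self_iff hrJ hrr).1 h)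

omit hr hrT in
theorem filter_commute :
    IsReflectionSystem cs J {t ∈ T | t ≠ r ∧ t * r = r * t} where
  mem t ht := hT.mem t (Finset.mem_filter.1 ht).1
  isReflection t ht := hT.isReflection t (Finset.mem_filter.1 ht).1
  inv_conj_mem s hs t ht := by
    obtain ⟨hsT, -, hs⟩ := Finset.mem_filter.1 hs
    obtain ⟨htT, htr, ht⟩ := Finset.mem_filter.1 ht
    have hs' : Commute s r := hs
    have hcomm : Commute (s⁻¹ * t * s) r := (hs'.inv_left.mul_left ht).mul_left hs'
    refine Finset.mem_filter.2 ⟨hT.inv_conj_mem s hsT t htT, fun h ↦ htr ?_, hcomm⟩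
    rw [mul_assoc, inv_mul_eq_iff_eq_mul, hs] at h
    exact mul_right_cancel h

end IsReflectionSystem

/-- Cancel the points of `X` off the wall nearest to the base point in pairs, and recurse on the
points of that wall with the reflections commuting with it. -/
theorem IsReflectionSystem.exists_involution_sum_pos {T : Finset W}
    (hT : IsReflectionSystem cs J T) : ∃ v ∈ closure (T : Set W), v * v = 1 ∧
      ∀ X : Finset V, (∀ t ∈ T, ∀ x ∈ X, R.rep t x ∈ X) → (∃ x ∈ X, R.rep v x = x) →
        0 < ∑ x ∈ X, ∏ t ∈ T, R.wallSign t x := by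
  induction T using Finset.strongInduction with
  | H T ih =>
    rcases T.eq_empty_or_nonempty with rfl | hne
    · refine ⟨1, one_mem _, mul_one 1, fun X _ ⟨x, hx, _⟩ ↦ ?_⟩
      simpa using Finset.card_pos.2 ⟨x, hx⟩
    obtain ⟨r, hr, hrT⟩ := hT.exists_forall_not_isLeftInversion R hne
    have hrJ := hT.mem r hr
    have hrr := hT.isReflection r hr
    set T' := T.filter fun t ↦ t ≠ r ∧ t * r = r * t
    have hmem {t} (ht : t ∈ T') : t ∈ T ∧ t ≠ r ∧ t * r = r * t := Finset.mem_filter.1 ht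
    obtain ⟨v, hv, hvv, hpos⟩ := ih T' (Finset.filter_ssubset.2 ⟨r, hr, fun h ↦ h.1 rfl⟩)
      hT.filter_commute
    have hvT : v ∈ closure (T : Set W) := closure_mono (fun t ht ↦ (hmem ht).1) hv
    have hcomm : v * r = r * v := mem_centralizer_singleton_iff.1 <|
      (closure_le (centralizer {r})).2
        (fun t ht ↦ mem_centralizer_singleton_iff.2 (hmem ht).2.2) hv
    have hvr : R.rep v (R.root r) = R.root r := by
      refine R.rep_eq_self_of_mem_closure (fun t ht ↦ ?_) hv
      obtain ⟨htT, htr, htcomm⟩ := hmem ht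
      exact (R.rep_eq_self_iff (hT.mem t htT) (hT.isReflection t htT)).2
        (R.form_root_root_eq_zero hrJ hrr (hT.mem t htT) (hT.isReflection t htT) htcomm htr)
    refine ⟨r * v, mul_mem (subset_closure hr) hvT, ?_, fun X hX ⟨x, hx, hfix⟩ ↦ ?_⟩
    · rw [mul_assoc, ← mul_assoc v, hcomm, mul_assoc, hvv, mul_one, hrr.mul_self]
    obtain ⟨hwall, hvx⟩ := R.form_root_eq_zero_and_rep_eq_self hrJ hrr
      (hT.closure_le_closure hvT) hvr hfix
    rw [hT.sum_prod_wallSign hr hrT (hX r hr)]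
    refine hpos _ (fun t ht x hx ↦ ?_) ⟨x, Finset.mem_filter.2 ⟨hx, hwall⟩, hvx⟩
    obtain ⟨hx, hwall⟩ := Finset.mem_filter.1 hx
    obtain ⟨htT, -, htr⟩ := hmem ht
    refine Finset.mem_filter.2 ⟨hX t htT x hx, ?_⟩
    rwa [R.form_root_rep_eq_zero_iff hrJ hrr (hT.mem t htT), mul_assoc, ← htr,
      inv_mul_cancel_left]

end EuclideanReflectionRep

section Poincare

open Polynomial

variable {B W : Type*} [Group W] {M : CoxeterMatrix B} (cs : CoxeterSystem M W) {A : Set W}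

/-- The length generating function of a finite subset of `W` (zero if the subset is infinite). -/
def poincare (A : Set W) : ℤ[X] :=
  ∑ᶠ x ∈ A, X ^ cs.length x

theorem poincare_eq_finsum_ite (A : Set W) :
    poincare cs A = ∑ᶠ x, if x ∈ A then X ^ cs.length x else 0 :=
  finsum_congr fun _ ↦ finsum_eq_if

theorem poincare_image {f : W → W} (hf : f.Injective)
    (hlen : ∀ x, cs.length (f x) = cs.length x) (A : Set W) :
    poincare cs (f '' A) = poincare cs A := by
  rw [poincare, finsum_mem_image hf.injOn]
  simp only [hlen, poincare]

theorem poincare_eq_sum (hA : A.Finite) : poincare cs A = ∑ x ∈ hA.toFinset, X ^ cs.length x :=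
  finsum_mem_eq_finite_toFinset_sum _ hA

theorem eval_poincare (hA : A.Finite) (a : ℤ) :
    (poincare cs A).eval a = ∑ x ∈ hA.toFinset, a ^ cs.length x := by
  simp only [poincare_eq_sum cs hA, eval_finsetSum, eval_pow, eval_X]

end Poincare

namespace EuclideanReflectionRep

open Module Subgroup

variable {B W : Type*} [Group W] {M : CoxeterMatrix B} {cs : CoxeterSystem M W} {J : Set W}
variable {V : Type*} [AddCommGroup V] [Module ℚ V] (R : EuclideanReflectionRep cs J V)
variable {K L : Set W} {t u v w y : W} {p : V}

/-- The simple reflections of `W_L` whose walls contain `p`. -/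
def stabSet (L : Set W) (p : V) : Set W :=
  {s ∈ L | R.form (R.root s) p = 0}

variable {R} in
theorem rep_eq_self_of_mem_closure_stabSet (hL : L ⊆ J) (hv : v ∈ closure (R.stabSet L p)) :
    R.rep v p = p :=
  R.rep_eq_self_of_mem_closure (fun _ hs ↦ (R.rep_eq_self_iff (subset_closure (hL hs.1))
    (isReflection_of_mem R.subset (hL hs.1))).2 hs.2) hv

theorem mem_closure_stabSet_of_rep_eq_self {R : EuclideanReflectionRep cs J V} (hL : L ⊆ J)
    (hp : R.IsDominant L p) (hv : v ∈ closure L) (hvp : R.rep v p = p) :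
    v ∈ closure (R.stabSet L p) :=
  (R.eq_and_mem_closure_of_isDominant hL hp hv (hvp.symm ▸ hp)).2

theorem form_root_rep_inv_neg_iff (hL : L ⊆ J) (hp : R.IsDominant L p) (hy : y ∈ closure L)
    (hred : IsLeftReduced cs (R.stabSet L p) y) (ht : t ∈ closure L) (hrefl : cs.IsReflection t) :
    R.form (R.root t) (R.rep y⁻¹ p) < 0 ↔ cs.IsLeftInversion y⁻¹ t := by
  obtain ⟨c, hc, h⟩ := R.exists_form_root_rep (closure_mono hL ht) hrefl
    (closure_mono hL (inv_mem hy)) p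
  have ht' := inv_conj_mem ht (inv_mem hy)
  have hrefl' := isReflection_inv_conj hrefl y⁻¹
  have hnonneg := hp _ ht' hrefl'
  rw [h]
  split_ifs with hinv
  · refine iff_of_true (mul_neg_of_neg_of_pos (neg_lt_zero.2 hc)
      (hnonneg.lt_of_ne fun hzero ↦ hred _ (mem_closure_stabSet_of_rep_eq_self hL hp ht' ?_) ?_))
      hinv
    · exact (R.rep_eq_self_iff (closure_mono hL ht') hrefl').2 hzero.symm
    · rwa [inv_inv, ← isLeftInversion_inv_iff hrefl]
  · exact iff_of_false (mul_nonneg hc.le hnonneg).not_gt hinv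

theorem prod_wallSign_rep_inv (hL : L ⊆ J) (hp : R.IsDominant L p) (hy : y ∈ closure L)
    (hred : IsLeftReduced cs (R.stabSet L p) y) {T : Finset W}
    (hT : ∀ t, t ∈ T ↔ t ∈ closure L ∧ cs.IsReflection t) :
    ∏ t ∈ T, R.wallSign t (R.rep y⁻¹ p) = (-1) ^ cs.length y := by
  have hset : {t ∈ T | R.form (R.root t) (R.rep y⁻¹ p) < 0} =
      {t | cs.IsLeftInversion y⁻¹ t} := by
    ext t
    simp only [Finset.coe_filter, Set.mem_ofPred_eq, hT]
    constructor
    · rintro ⟨⟨ht, hrefl⟩, hneg⟩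
      exact (R.form_root_rep_inv_neg_iff hL hp hy hred ht hrefl).1 hneg
    · intro h
      have ht := mem_closure_of_isLeftInversion (hL.trans R.subset) (inv_mem hy) h
      exact ⟨⟨ht, h.1⟩, (R.form_root_rep_inv_neg_iff hL hp hy hred ht h.1).2 h⟩
  simp only [wallSign]
  rw [Finset.prod_ite, Finset.prod_const, Finset.prod_const_one, mul_one, ← cs.length_inv y,
    ← ncard_isLeftInversion, ← hset, Set.ncard_coe_finset]

/-- Orbit points of `p` correspond to minimal coset representatives modulo its stabilizer. -/
theorem sum_orbit_prod_wallSign (hL : L ⊆ J) (hp : R.IsDominant L p) {T : Finset W}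
    (hT : ∀ t, t ∈ T ↔ t ∈ closure L ∧ cs.IsReflection t) {X : Finset V}
    (hX : ∀ x, x ∈ X ↔ ∃ u ∈ closure L, R.rep u p = x) :
    ∑ x ∈ X, ∏ t ∈ T, R.wallSign t x =
      (poincare cs {y ∈ (closure L : Set W) | IsLeftReduced cs (R.stabSet L p) y}).eval (-1) := by
  have hstab : R.stabSet L p ⊆ L := Set.sep_subset ..
  have hfin := (R.finite.subset (closure_mono hL)).subset
    (Set.sep_subset (closure L : Set W) (IsLeftReduced cs (R.stabSet L p)))
  rw [eval_poincare cs hfin]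
  symm
  refine Finset.sum_bij (fun y _ ↦ R.rep y⁻¹ p) (fun y hy ↦ ?_) (fun y hy z hz h ↦ ?_)
    (fun x hx ↦ ?_) fun y hy ↦ ?_
  · exact (hX _).2 ⟨y⁻¹, inv_mem (hfin.mem_toFinset.1 hy).1, rfl⟩
  · obtain ⟨hyL, hyred⟩ := hfin.mem_toFinset.1 hy
    obtain ⟨hzL, hzred⟩ := hfin.mem_toFinset.1 hz
    have hfix : R.rep (z * y⁻¹) p = p := by rw [rep_mul_apply, h, Representation.self_inv_apply]
    have hmem := mem_closure_stabSet_of_rep_eq_self hL hp (mul_mem hzL (inv_mem hyL)) hfix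
    have hone := hyred.eq_one_of_mul_eq (hstab.trans (hL.trans R.subset)) hzred hmem
      (inv_mul_cancel_right z y)
    exact (mul_inv_eq_one.1 hone).symm
  · obtain ⟨u, hu, rfl⟩ := (hX x).1 hx
    obtain ⟨k, hk, y, hy, hky⟩ := exists_mul_isLeftReduced cs (R.stabSet L p) u⁻¹
    have hyL : y ∈ closure L := by
      rw [← inv_mul_eq_iff_eq_mul.2 hky.symm]
      exact mul_mem (inv_mem (closure_mono hstab hk)) (inv_mem hu)
    refine ⟨y, hfin.mem_toFinset.2 ⟨hyL, hy⟩, ?_⟩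
    rw [← inv_inv u, ← hky, mul_inv_rev, rep_mul_apply,
      rep_eq_self_of_mem_closure_stabSet hL (inv_mem hk)]
  · obtain ⟨hyL, hyred⟩ := hfin.mem_toFinset.1 hy
    exact (R.prod_wallSign_rep_inv hL hp hyL hyred hT).symm

theorem exists_negatesRoots_conj (hL : L ⊆ J) (hw : IsLongest cs L w) :
    ∃ g ∈ closure L, ∃ K ⊆ L, g * w * g⁻¹ ∈ closure K ∧ R.NegatesRoots K (g * w * g⁻¹) ∧
      0 < (poincare cs {y ∈ (closure L : Set W) | IsLeftReduced cs K y}).eval (-1) := by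
  have hLS := hL.trans R.subset
  obtain ⟨g, hg, y, hwy, hdom, hmem, hneg⟩ :=
    R.exists_isDominant_fixed hL hw.mem (hw.mul_self hLS)
  refine ⟨g, hg, R.stabSet L (R.rep g y), Set.sep_subset .., hmem, hneg, ?_⟩
  have hfin := R.finite.subset (closure_mono hL)
  let T := hfin.toFinset.filter cs.IsReflection
  have hT (t) : t ∈ T ↔ t ∈ closure L ∧ cs.IsReflection t := by simp [T]
  let X := hfin.toFinset.image (R.rep · (R.rep g y))
  have hX (x) : x ∈ X ↔ ∃ u ∈ closure L, R.rep u (R.rep g y) = x := by simp [X]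
  have hsys : IsReflectionSystem cs J T :=
    ⟨fun t ht ↦ closure_mono hL ((hT t).1 ht).1, fun t ht ↦ ((hT t).1 ht).2, fun r hr t ht ↦
      (hT _).2 ⟨inv_conj_mem ((hT t).1 ht).1 ((hT r).1 hr).1,
        isReflection_inv_conj ((hT t).1 ht).2 r⟩⟩
  obtain ⟨v, hv, hvv, hpos⟩ := hsys.exists_involution_sum_pos R
  have hvL : v ∈ closure L := (closure_le _).2 (fun t ht ↦ ((hT t).1 ht).1) hv
  obtain ⟨u, hu, hfix⟩ := R.exists_conj_forall_fixed hL hw hvL hvv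
  rw [← R.sum_orbit_prod_wallSign hL hdom hT hX]
  refine hpos X (fun t ht x hx ↦ ?_) ⟨R.rep u⁻¹ y, (hX _).2 ⟨u⁻¹ * g⁻¹, ?_, ?_⟩, ?_⟩
  · obtain ⟨z, hz, rfl⟩ := (hX x).1 hx
    exact (hX _).2 ⟨t * z, mul_mem ((hT t).1 ht).1 hz, R.rep_mul_apply ..⟩
  · exact mul_mem (inv_mem hu) (inv_mem hg)
  · rw [← rep_mul_apply, inv_mul_cancel_right]
  · have h := congrArg (R.rep u⁻¹) (hfix y hwy)
    rwa [mul_assoc, rep_mul_apply, Representation.inv_self_apply, rep_mul_apply] at h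

end EuclideanReflectionRep

/-! ### Orders of vanishing at `-1` -/

section PosOrder

open Polynomial Finset

/-- `P` vanishes to order exactly `m` at `-1`, with positive leading coefficient in the local
parameter `X + 1`. -/
def HasPosOrder (P : ℤ[X]) (m : ℕ) : Prop :=
  ∃ R : ℤ[X], P = (X + 1) ^ m * R ∧ 0 < R.eval (-1)

variable {P Q A : ℤ[X]} {m n N : ℕ}

theorem X_add_one_eq : (X + 1 : ℤ[X]) = X - C (-1) := by
  rw [C_neg, sub_neg_eq_add, C_1]

theorem not_X_add_one_dvd (h : P.eval (-1) ≠ 0) : ¬X + 1 ∣ P := by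
  rwa [X_add_one_eq, dvd_iff_isRoot]

theorem HasPosOrder.of_eval_pos (h : 0 < P.eval (-1)) : HasPosOrder P 0 :=
  ⟨P, by rw [pow_zero, one_mul], h⟩

theorem HasPosOrder.mul (hP : HasPosOrder P m) (hQ : HasPosOrder Q n) :
    HasPosOrder (P * Q) (m + n) := by
  obtain ⟨R, rfl, hR⟩ := hP
  obtain ⟨T, rfl, hT⟩ := hQ
  exact ⟨R * T, by ring, by rw [eval_mul]; exact mul_pos hR hT⟩

theorem HasPosOrder.of_mul (h : HasPosOrder (P * A) n) (hA : 0 < A.eval (-1)) :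
    HasPosOrder P n := by
  obtain ⟨R, hPA, hR⟩ := h
  have hprime : Prime (X + 1 : ℤ[X]) := X_add_one_eq ▸ prime_X_sub_C (-1)
  obtain ⟨T, rfl⟩ := hprime.pow_dvd_of_dvd_mul_right n (not_X_add_one_dvd hA.ne')
    (hPA.symm ▸ dvd_mul_right _ R)
  have hTA : T * A = R := mul_left_cancel₀ (pow_ne_zero n hprime.ne_zero) (by rw [← hPA, mul_assoc])
  refine ⟨T, rfl, pos_of_mul_pos_left ?_ hA.le⟩
  rwa [← eval_mul, hTA]

theorem HasPosOrder.le (hm : HasPosOrder P m) (hn : HasPosOrder P n) : m ≤ n := by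
  obtain ⟨R, rfl, -⟩ := hm
  obtain ⟨T, hT, hpos⟩ := hn
  by_contra! hlt
  have hX : (X + 1 : ℤ[X]) ≠ 0 := X_add_one_eq ▸ X_sub_C_ne_zero (-1)
  rw [← Nat.add_sub_of_le hlt.le, pow_add, mul_assoc] at hT
  refine not_X_add_one_dvd hpos.ne' (mul_left_cancel₀ (pow_ne_zero n hX) hT ▸ ?_)
  exact (dvd_pow_self _ (Nat.sub_ne_zero_of_lt hlt)).mul_right R

theorem HasPosOrder.unique (hm : HasPosOrder P m) (hn : HasPosOrder P n) : m = n :=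
  (hm.le hn).antisymm (hn.le hm)

theorem hasPosOrder_geom_sum (e : ℕ) :
    HasPosOrder (∑ j ∈ range (e + 1), (X : ℤ[X]) ^ j) (if Odd e then 1 else 0) := by
  split_ifs with he
  · obtain ⟨k, rfl⟩ := he
    refine ⟨∑ j ∈ range (k + 1), (X ^ 2) ^ j, ?_, ?_⟩
    · induction k with
      | zero => simp [sum_range_succ, add_comm]
      | succ k ih =>
        rw [mul_add_one, sum_range_succ, sum_range_succ, show 2 * k + 2 = 2 * k + 1 + 1 from rfl,
          ih, sum_range_succ _ (k + 1)]
        ring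
    · simp only [eval_finsetSum, eval_pow, eval_X, neg_one_sq, one_pow, sum_const, card_range]
      positivity
  · refine HasPosOrder.of_eval_pos ?_
    simp only [eval_finsetSum, eval_pow, eval_X]
    rw [neg_one_geom_sum, if_neg (by rwa [Nat.even_add_one, Nat.not_even_iff_odd])]
    exact one_pos

theorem hasPosOrder_prod {ι : Type*} {s : Finset ι} {f : ι → ℤ[X]} {m : ι → ℕ}
    (h : ∀ i ∈ s, HasPosOrder (f i) (m i)) : HasPosOrder (∏ i ∈ s, f i) (∑ i ∈ s, m i) := by
  induction s using Finset.induction_on with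
  | empty => exact .of_eval_pos (by simp)
  | insert i s hi ih =>
    rw [prod_insert hi, sum_insert hi]
    exact (h i (mem_insert_self i s)).mul (ih fun j hj ↦ h j (mem_insert_of_mem hj))

theorem hasPosOrder_prod_geom_sum {k : ℕ} (e : Fin k → ℕ) :
    HasPosOrder (∏ i, ∑ j ∈ range (e i + 1), (X : ℤ[X]) ^ j) #{i | Odd (e i)} := by
  rw [card_filter]
  exact hasPosOrder_prod fun i _ ↦ hasPosOrder_geom_sum (e i)

theorem hasPosOrder_neg_one_pow_mul_X_pow_sub (hN : 0 < N) :
    HasPosOrder ((-1) ^ (N + 1) * (X ^ N - (-1) ^ N)) 1 := by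
  refine ⟨(-1) ^ (N + 1) * ∑ i ∈ range N, X ^ i * (-1) ^ (N - 1 - i), ?_, ?_⟩
  · rw [pow_one, ← geom_sum₂_mul]
    ring
  · have hterm : ∀ i ∈ range N, (-1 : ℤ) ^ i * (-1) ^ (N - 1 - i) = (-1) ^ (N + 1) := by
      intro i hi
      have hi := mem_range.1 hi
      rw [← pow_add, neg_one_pow_congr]
      grind
    simp only [eval_mul, eval_pow, eval_neg, eval_one, eval_finsetSum, eval_X]
    rw [sum_congr rfl hterm, sum_const, card_range, nsmul_eq_mul, mul_left_comm, ← mul_pow]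
    simpa using hN

/-- Summing `Q i = P / F i` with signs exhibits `P` times a rational function with leading
order governed by the `F i` of maximal order. -/
theorem hasPosOrder_of_alternating_sum {ι : Type*} {s : Finset ι} {Q F : ι → ℤ[X]}
    {m c : ι → ℕ} (hP : ∀ i ∈ s, Q i * F i = P) (hF : ∀ i ∈ s, HasPosOrder (F i) (m i))
    (hmc : ∀ i ∈ s, m i ≤ c i) (hcn : ∀ i ∈ s, c i ≤ n) (hmax : ∃ i ∈ s, m i = n)
    (hsum : ∑ i ∈ s, (-1) ^ c i * Q i = X ^ N - (-1) ^ N) (hN : 0 < N)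
    (hNn : Even (N + (n + 1))) : HasPosOrder P (n + 1) := by
  choose! R hFR hR using hF
  let D : ι → ℤ[X] := fun i ↦ ∏ j ∈ s.erase i, R j
  let A : ι → ℤ[X] := fun i ↦ (-1) ^ (n + c i) * ((X + 1) ^ (n - m i) * D i)
  have hD : ∀ i, 0 < (D i).eval (-1) := fun i ↦ by
    rw [eval_prod]
    exact prod_pos fun j hj ↦ hR j (mem_of_mem_erase hj)
  have hterm : ∀ i ∈ s, P * A i =
      (X + 1) ^ n * (∏ j ∈ s, R j) * (-1) ^ n * ((-1) ^ c i * Q i) := by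
    intro i hi
    have hpow : (X + 1 : ℤ[X]) ^ n = (X + 1) ^ m i * (X + 1) ^ (n - m i) := by
      rw [← pow_add, Nat.add_sub_of_le ((hmc i hi).trans (hcn i hi))]
    rw [← hP i hi, hFR i hi, ← mul_prod_erase s R hi, hpow]
    ring
  have heval : ∀ i ∈ s, (A i).eval (-1) = if m i = n then (D i).eval (-1) else 0 := by
    intro i hi
    simp only [A, eval_mul, eval_pow, eval_add, eval_neg, eval_X, eval_one, neg_add_cancel]
    split_ifs with h
    · rw [h, Nat.sub_self, pow_zero, one_mul, (hcn i hi).antisymm (h ▸ hmc i hi), ← two_mul,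
        pow_mul, neg_one_sq, one_pow, one_mul]
    · rw [zero_pow (Nat.sub_ne_zero_of_lt (((hmc i hi).trans (hcn i hi)).lt_of_ne h)), zero_mul,
        mul_zero]
  refine HasPosOrder.of_mul (A := ∑ i ∈ s, A i) ?_ ?_
  · have hsign : ((-1) ^ n : ℤ[X]) = (-1) ^ (N + 1) := by
      rw [neg_one_pow_congr]
      grind
    rw [mul_sum, sum_congr rfl hterm, ← mul_sum, hsum, hsign, mul_assoc]
    refine HasPosOrder.mul ⟨_, rfl, ?_⟩ (hasPosOrder_neg_one_pow_mul_X_pow_sub hN)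
    rw [eval_prod]
    exact prod_pos hR
  · obtain ⟨i, hi, him⟩ := hmax
    rw [eval_finsetSum, sum_congr rfl heval]
    refine sum_pos' (fun j _ ↦ ?_) ⟨i, hi, ?_⟩
    · split_ifs
      exacts [(hD j).le, le_rfl]
    · rw [if_pos him]
      exact hD i

end PosOrder

section Poincare

open Polynomial Subgroup

variable {B W : Type*} [Group W] {M : CoxeterMatrix B} {cs : CoxeterSystem M W} {I L : Set W}

theorem poincare_closure_mul (hI : I ⊆ Set.range cs.simple) (hIL : I ⊆ L)
    (hfin : (closure L : Set W).Finite) :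
    poincare cs {y ∈ (closure L : Set W) | IsLeftReduced cs I y} *
      poincare cs (closure I : Set W) = poincare cs (closure L : Set W) := by
  have hfinI := hfin.subset (closure_mono hIL)
  have hfinQ := hfin.subset (Set.sep_subset (closure L : Set W) (IsLeftReduced cs I))
  rw [poincare_eq_sum cs hfin, poincare_eq_sum cs hfinI, poincare_eq_sum cs hfinQ,
    Finset.sum_mul_sum, ← Finset.sum_product']
  refine Finset.sum_bij (fun p _ ↦ p.2 * p.1) (fun p hp ↦ ?_) (fun p hp q hq h ↦ ?_)
    (fun x hx ↦ ?_) fun p hp ↦ ?_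
  all_goals simp only [Finset.mem_product, Set.Finite.mem_toFinset] at *
  · exact mul_mem (closure_mono hIL hp.2) hp.1.1
  · have hone := hp.1.2.eq_one_of_mul_eq hI hq.1.2 (mul_mem (inv_mem hq.2) hp.2)
      (by rw [mul_assoc, h, inv_mul_cancel_left])
    have h2 := inv_mul_eq_one.1 hone
    rw [h2] at h
    exact Prod.ext (mul_left_cancel h) h2.symm
  · obtain ⟨u, hu, y, hy, huy⟩ := exists_mul_isLeftReduced cs I x
    refine ⟨(y, u), ⟨⟨?_, hy⟩, hu⟩, huy⟩
    rw [← inv_mul_eq_iff_eq_mul.2 huy.symm]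
    exact mul_mem (inv_mem (closure_mono hIL hu)) hx
  · rw [hp.1.2.length_mul hI hp.2, pow_add, mul_comm]

theorem poincare_singleton_one : poincare cs ({1} : Set W) = 1 := by
  rw [poincare, finsum_mem_singleton, cs.length_one, pow_zero]

theorem poincare_isLeftReduced_self (hI : I ⊆ Set.range cs.simple) :
    poincare cs {y ∈ (closure I : Set W) | IsLeftReduced cs I y} = 1 := by
  rw [← poincare_singleton_one (cs := cs)]
  congr 1
  ext y
  refine ⟨fun h ↦ eq_one_of_forall_not_isLeftInversion hI h.1 fun s hs ↦
    h.2 s (subset_closure hs), ?_⟩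
  rintro rfl
  exact ⟨one_mem _, fun t _ ↦ not_isLeftInversion_one⟩

theorem sum_neg_one_pow_filter_isLeftReduced {F : Finset W} (hF : (F : Set W) ⊆ Set.range cs.simple)
    {w y : W} (hw : IsLongest cs F w) (hy : y ∈ closure (F : Set W)) :
    ∑ I ∈ F.powerset.filter fun I : Finset W ↦ IsLeftReduced cs (I : Set W) y,
      (-1 : ℤ) ^ I.card = if y = w then 1 else 0 := by
  have hpow : F.powerset.filter (fun I : Finset W ↦ IsLeftReduced cs (I : Set W) y) =
      ({s ∈ F | ¬cs.IsLeftInversion y s} : Finset W).powerset := by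
    ext I
    simp only [Finset.mem_filter, Finset.mem_powerset]
    refine ⟨fun ⟨hIF, h⟩ s hs ↦ Finset.mem_filter.2 ⟨hIF hs, h s (subset_closure hs)⟩, fun h ↦ ?_⟩
    have hIF := h.trans (Finset.filter_subset ..)
    exact ⟨hIF, (isLeftReduced_iff ((Finset.coe_subset.2 hIF).trans hF)).2 fun s hs ↦
      (Finset.mem_filter.1 (h hs)).2⟩
  have hempty : {s ∈ F | ¬cs.IsLeftInversion y s} = ∅ ↔ y = w := by
    simp only [Finset.filter_eq_empty_iff, not_not]
    refine ⟨hw.eq_of_forall_isLeftInversion hF hy, ?_⟩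
    rintro rfl s hs
    exact hw.isLeftInversion s (subset_closure hs) (isReflection_of_mem hF hs)
  rw [hpow, Finset.sum_powerset_neg_one_pow_card]
  simp only [hempty]

theorem sum_neg_one_pow_mul_poincare {F : Finset W} (hF : (F : Set W) ⊆ Set.range cs.simple)
    (hfin : (closure (F : Set W) : Set W).Finite) {w : W} (hw : IsLongest cs F w) :
    ∑ I ∈ F.powerset, (-1) ^ I.card *
      poincare cs {y ∈ (closure (F : Set W) : Set W) | IsLeftReduced cs I y} =
        X ^ cs.length w := by
  have hQ : ∀ I ∈ F.powerset, (-1) ^ I.card *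
      poincare cs {y ∈ (closure (F : Set W) : Set W) | IsLeftReduced cs I y} =
        ∑ y ∈ hfin.toFinset, if IsLeftReduced cs I y then (-1) ^ I.card * X ^ cs.length y
          else 0 := by
    intro I _
    rw [poincare_eq_sum cs (hfin.subset (Set.sep_subset ..)), Finset.mul_sum, ← Finset.sum_filter]
    exact Finset.sum_congr (Finset.ext fun y ↦ by simp) fun _ _ ↦ rfl
  have hinner : ∀ y ∈ hfin.toFinset, (∑ I ∈ F.powerset,
      if IsLeftReduced cs I y then (-1) ^ I.card * (X : ℤ[X]) ^ cs.length y else 0) =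
        if y = w then X ^ cs.length y else 0 := by
    intro y hy
    have hcast := congrArg (Int.cast (R := ℤ[X]))
      (sum_neg_one_pow_filter_isLeftReduced hF hw (hfin.mem_toFinset.1 hy))
    push_cast at hcast
    rw [← Finset.sum_filter, ← Finset.sum_mul, hcast, ite_mul, one_mul, zero_mul]
  rw [Finset.sum_congr rfl hQ, Finset.sum_comm, Finset.sum_congr rfl hinner,
    Finset.sum_ite_eq_of_mem' _ _ _ (hfin.mem_toFinset.2 hw.mem)]

theorem sum_ssubsets_neg_one_pow_mul_poincare {F : Finset W}
    (hF : (F : Set W) ⊆ Set.range cs.simple) (hfin : (closure (F : Set W) : Set W).Finite) {w : W}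
    (hw : IsLongest cs F w) :
    ∑ I ∈ F.ssubsets, (-1) ^ I.card *
      poincare cs {y ∈ (closure (F : Set W) : Set W) | IsLeftReduced cs I y} =
        X ^ cs.length w - (-1) ^ F.card := by
  have hsum := sum_neg_one_pow_mul_poincare hF hfin hw
  rw [← Finset.sum_erase_add _ _ (Finset.mem_powerset_self F), poincare_isLeftReduced_self hF,
    mul_one] at hsum
  exact eq_sub_of_add_eq hsum

end Poincare

namespace EuclideanReflectionRep

open Module Subgroup

variable {B W : Type*} [Group W] {M : CoxeterMatrix B} {cs : CoxeterSystem M W} {J : Set W}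
variable {V : Type*} [AddCommGroup V] [Module ℚ V] {R : EuclideanReflectionRep cs J V}
variable {L : Set W} {g s w : W}

theorem odd_length_conj_mul_add (g w : W) (hs : cs.IsReflection s) :
    Odd (cs.length (g * (w * s) * g⁻¹) + cs.length w) := by
  have h₁ := cs.length_mul_mod_two (g * (w * s)) g⁻¹
  have h₂ := cs.length_mul_mod_two g (w * s)
  have h₃ := cs.length_mul_mod_two w s
  have h₄ := hs.odd_length
  rw [cs.length_inv] at h₁
  grind

theorem finite_of_subset (R : EuclideanReflectionRep cs J V) (hL : L ⊆ J) : L.Finite :=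
  R.finite.subset (subset_closure.trans (closure_mono hL))

variable (R) in
theorem negRank_le_ncard [FiniteDimensional ℚ V] (hL : L ⊆ J) (hw : w ∈ closure L) :
    R.negRank w ≤ L.ncard :=
  (Submodule.finrank_mono (R.eigenspace_neg_one_le_span hL hw)).trans_eq (R.finrank_span_root hL)

theorem NegatesRoots.exists_ssubset [FiniteDimensional ℚ V] (hneg : R.NegatesRoots L w)
    (hL : L ⊆ J) (hw : w ∈ closure L) (hs : s ∈ L) :
    ∃ K ⊂ L, K.ncard + 1 = L.ncard ∧ ∃ g, g * (w * s) * g⁻¹ ∈ closure K ∧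
      R.NegatesRoots K (g * (w * s) * g⁻¹) := by
  have hLS := hL.trans R.subset
  have hrefl := isReflection_of_mem R.subset (hL hs)
  have hlong := hneg.isLongest hL hw
  have hcomm := hneg.mul_comm hL (closure_mono hL hw) hs
  have hws : w * s * (w * s) = 1 := by
    nth_rw 1 [hcomm]
    rw [mul_assoc, ← mul_assoc w, hlong.mul_self hLS, one_mul, hrefl.mul_self]
  obtain ⟨g, -, y, -, -, hmem, hK⟩ :=
    R.exists_isDominant_fixed hL (mul_mem hw (subset_closure hs)) hws
  set K := {s | s ∈ L ∧ R.form (R.root s) (R.rep g y) = 0}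
  have hKL : K ⊂ L := by
    refine (Set.sep_subset ..).ssubset_of_ne fun hKL ↦ ?_
    rw [show K = L from hKL] at hmem hK
    have hodd := odd_length_conj_mul_add g w hrefl
    rw [hlong.unique hLS (hK.isLongest hL hmem)] at hodd
    exact Nat.not_odd_iff_even.2 (Even.add_self _) hodd
  refine ⟨K, hKL, ?_, g, hmem, hK⟩
  have hlt := Set.ncard_lt_ncard hKL (R.finite_of_subset hL)
  have hle := R.negRank_le_negRank_mul_add_one (subset_closure (hL hs)) hrefl w
  rw [← R.negRank_conj g (w * s), hneg.negRank hL hw, hK.negRank (hKL.subset.trans hL) hmem] at hle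
  omega

theorem NegatesRoots.even_length_add_ncard [FiniteDimensional ℚ V] (hneg : R.NegatesRoots L w)
    (hL : L ⊆ J) (hw : w ∈ closure L) : Even (cs.length w + L.ncard) := by
  induction h : L.ncard generalizing L w with
  | zero =>
    rw [(Set.ncard_eq_zero (R.finite_of_subset hL)).1 h, Subgroup.closure_empty, mem_bot] at hw
    rw [hw, cs.length_one]
    exact Even.zero
  | succ n ih =>
    obtain ⟨s, hs⟩ := Set.nonempty_of_ncard_ne_zero (h.trans_ne n.succ_ne_zero)
    obtain ⟨K, hKL, hcard, g, hmem, hK⟩ := hneg.exists_ssubset hL hw hs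
    have heven := ih hK (hKL.subset.trans hL) hmem (by omega)
    have hodd := odd_length_conj_mul_add g w (isReflection_of_mem R.subset (hL hs))
    grind

theorem NegatesRoots.hasPosOrder_poincare [FiniteDimensional ℚ V] (hneg : R.NegatesRoots L w)
    (hL : L ⊆ J) (hw : w ∈ closure L) (hne : L.Nonempty)
    (ih : ∀ K ⊂ L, ∀ v, IsLongest cs K v → HasPosOrder (poincare cs (closure K : Set W))
      (R.negRank v)) :
    HasPosOrder (poincare cs (closure L : Set W)) (R.negRank w) := by
  have hLS := hL.trans R.subset
  have hfin := R.finite.subset (closure_mono hL)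
  have hlong := hneg.isLongest hL hw
  have heven := hneg.even_length_add_ncard hL hw
  obtain ⟨s, hs⟩ := hne
  obtain ⟨K, hKL, hcard, g, hmem, hK⟩ := hneg.exists_ssubset hL hw hs
  obtain ⟨F, rfl⟩ := (R.finite_of_subset hL).exists_finset_coe
  lift K to Finset W using F.finite_toSet.subset hKL.subset
  have hss {I : Finset W} (hI : I ∈ F.ssubsets) : (I : Set W) ⊂ F :=
    Finset.coe_ssubset.2 (Finset.mem_ssubsets.1 hI)
  have hex (I : Finset W) (hI : I ∈ F.ssubsets) : ∃ v, IsLongest cs (I : Set W) v :=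
    exists_isLongest cs (hfin.subset (closure_mono (hss hI).subset))
  choose! v hv using hex
  have hKF : K ∈ F.ssubsets := Finset.mem_ssubsets.2 (Finset.coe_ssubset.1 hKL)
  rw [Set.ncard_coe_finset, Set.ncard_coe_finset] at hcard
  rw [Set.ncard_coe_finset] at heven
  rw [hneg.negRank hL hw, Set.ncard_coe_finset, ← hcard]
  refine hasPosOrder_of_alternating_sum (N := cs.length w)
    (fun I hI ↦ poincare_closure_mul ((hss hI).subset.trans hLS) (hss hI).subset hfin)
    (fun I hI ↦ ih I (hss hI) (v I) (hv I hI)) (c := Finset.card)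
    (fun I hI ↦ ?_) (fun I hI ↦ ?_) ⟨K, hKF, ?_⟩ ?_ ?_ ?_
  · exact (R.negRank_le_ncard ((hss hI).subset.trans hL) (hv I hI).mem).trans_eq
      (Set.ncard_coe_finset I)
  · have := Finset.card_lt_card (Finset.mem_ssubsets.1 hI)
    omega
  · have hKJ := hKL.subset.trans hL
    rw [← (hv K hKF).unique (hKJ.trans R.subset) (hK.isLongest hKJ hmem), hK.negRank hKJ hmem,
      Set.ncard_coe_finset]
  · have hsign : ((-1) ^ cs.length w : Polynomial ℤ) = (-1) ^ F.card := by
      rw [neg_one_pow_congr]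
      grind
    rw [hsign]
    exact sum_ssubsets_neg_one_pow_mul_poincare hLS hfin hlong
  · have := length_simple_mul_of_isLeftInversion (hLS hs)
      (hlong.isLeftInversion s (subset_closure hs) (isReflection_of_mem hLS hs))
    omega
  · rwa [hcard]

theorem hasPosOrder_poincare [FiniteDimensional ℚ V] (hL : L ⊆ J) (hw : IsLongest cs L w) :
    HasPosOrder (poincare cs (closure L : Set W)) (R.negRank w) := by
  induction h : L.ncard using Nat.strong_induction_on generalizing L w with
  | _ n ih =>
  have hfin := R.finite_of_subset hL
  have hih (K) (hKL : K ⊂ L) (v) (hv : IsLongest cs K v) :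
      HasPosOrder (poincare cs (closure K : Set W)) (R.negRank v) :=
    ih _ (h ▸ Set.ncard_lt_ncard hKL hfin) (hKL.subset.trans hL) hv rfl
  obtain ⟨g, -, K, hKL, hmem, hK, hpos⟩ := R.exists_negatesRoots_conj hL hw
  have hKJ := hKL.trans hL
  have hlong := hK.isLongest hKJ hmem
  rw [← R.negRank_conj g]
  rcases hKL.eq_or_ssubset with rfl | hlt
  · rcases K.eq_empty_or_nonempty with rfl | hne
    · rw [hK.negRank hKJ hmem, Set.ncard_empty]
      rw [Subgroup.closure_empty, coe_bot, poincare_singleton_one]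
      exact .of_eval_pos (by simp)
    · exact hK.hasPosOrder_poincare hKJ hmem hne hih
  · rw [← poincare_closure_mul (hKJ.trans R.subset) hKL (R.finite.subset (closure_mono hL)),
      ← zero_add (R.negRank _)]
    exact (HasPosOrder.of_eval_pos hpos).mul (hih K hlt _ hlong)

theorem card_odd_eq_negRank [FiniteDimensional ℚ V] (hL : L ⊆ J) (hw : IsLongest cs L w) {k : ℕ}
    {e : Fin k → ℕ} (he : poincare cs (closure L : Set W) =
      ∏ i, ∑ j ∈ Finset.range (e i + 1), Polynomial.X ^ j) :
    (Finset.univ.filter fun i ↦ Odd (e i)).card = R.negRank w :=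
  (he ▸ hasPosOrder_prod_geom_sum e).unique (hasPosOrder_poincare hL hw)

end EuclideanReflectionRep

/-! ### Inversions along translations -/

section AlmostInvariant

open Filter

theorem eventually_atTop_or_eventually_not {f : ℕ → Prop} (h : ∀ᶠ k in atTop, f (k + 1) ↔ f k) :
    (∀ᶠ k in atTop, f k) ∨ ∀ᶠ k in atTop, ¬ f k := by
  obtain ⟨N, hN⟩ := eventually_atTop.1 h
  have hconst : ∀ k ≥ N, f k ↔ f N := fun k hk ↦ by
    induction k, hk using Nat.le_induction with
    | base => rfl
    | succ k hk ih => rw [hN k hk, ih]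
  by_cases hf : f N
  · exact .inl (eventually_atTop.2 ⟨N, fun k hk ↦ (hconst k hk).2 hf⟩)
  · exact .inr (eventually_atTop.2 ⟨N, fun k hk ↦ mt (hconst k hk).1 hf⟩)

theorem int_iff_of_forall_add_one_iff {f : ℤ → Prop} (h : ∀ k, f (k + 1) ↔ f k) (i j : ℤ) :
    f i ↔ f j := by
  have hzero : ∀ k, f k ↔ f 0 := fun k ↦ by
    induction k using Int.induction_on with
    | zero => rfl
    | succ k ih => rw [h, ih]
    | pred k ih => rw [← ih, ← h, sub_add_cancel]
  rw [hzero i, hzero j]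

theorem eventually_forall_of_abs_eq {P : ℤ × ℤ → Prop} (h : ∀ᶠ p in cofinite, P p) :
    ∀ᶠ N : ℕ in atTop, ∀ p : ℤ × ℤ, (N : ℤ) = |p.1| ∨ (N : ℤ) = |p.2| → P p := by
  obtain ⟨b, hb⟩ := ((Filter.eventually_cofinite.1 h).image
    fun p ↦ max p.1.natAbs p.2.natAbs).bddAbove
  filter_upwards [eventually_gt_atTop b] with N hN p hp
  by_contra hP
  have := hb ⟨p, hP, rfl⟩
  simp only [Int.abs_eq_natAbs, Nat.cast_inj] at hp this
  omega

/-- A large square in `ℤ²` is connected, so an almost invariant set takes the same value at its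
opposite corners: `ℤ²` has only one end. -/
theorem not_eventually_neg_iff_not {f : ℤ × ℤ → Prop}
    (h₁ : ∀ᶠ p in cofinite, f (p + (1, 0)) ↔ f p) (h₂ : ∀ᶠ p in cofinite, f (p + (0, 1)) ↔ f p) :
    ¬ ∀ᶠ p in cofinite, f (-p) ↔ ¬ f p := by
  intro h
  obtain ⟨N, hN₁, hN₂, hN⟩ := ((eventually_forall_of_abs_eq h₁).and
    ((eventually_forall_of_abs_eq h₂).and (eventually_forall_of_abs_eq h))).exists
  have habs : (N : ℤ) = |(N : ℤ)| := (abs_of_nonneg N.cast_nonneg).symm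
  have hrow : f (-N, N) ↔ f (N, N) :=
    int_iff_of_forall_add_one_iff (f := fun i ↦ f (i, N))
      (fun i ↦ by simpa using hN₁ (i, N) (.inr habs)) _ _
  have hcol : f (-N, -N) ↔ f (-N, N) :=
    int_iff_of_forall_add_one_iff (f := fun j ↦ f (-N, j))
      (fun j ↦ by simpa using hN₂ (-N, j) (.inl (by simp))) _ _
  exact iff_not_self (hrow.symm.trans (hcol.symm.trans (hN (N, N) (.inl habs))))

end AlmostInvariant

section Translations

open Filter

variable {B W : Type*} [Group W] {M : CoxeterMatrix B} {cs : CoxeterSystem M W}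
variable {A : Subgroup W} {c m m₀ t w x y : W}

theorem isLeftInversion_mul_of_commute (ht : cs.IsReflection t) (hc : Commute c t) :
    cs.IsLeftInversion (c * m) t ↔ ¬ (cs.IsLeftInversion c t ↔ cs.IsLeftInversion m t) := by
  rw [isLeftInversion_mul_iff ht, mul_assoc, ← hc.eq, inv_mul_cancel_left]

/-- The neighbourhoods of infinity in `W`, seen through the reflections `w⁻¹ t w`. -/
def atConjInfty (t : W) : Filter W :=
  comap (fun w ↦ w⁻¹ * t * w) cofinite

theorem frequently_atConjInfty_mem_iff :
    (∃ᶠ w in atConjInfty t, w ∈ A) ↔ ((fun w ↦ w⁻¹ * t * w) '' (A : Set W)).Infinite := by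
  rw [atConjInfty, frequently_comap, ← frequently_cofinite_mem_iff_infinite]
  simp [and_comm]

theorem tendsto_atConjInfty {ι : Type*} {g : ι → W}
    (hg : Function.Injective fun i ↦ (g i)⁻¹ * t * g i) : Tendsto g cofinite (atConjInfty t) :=
  tendsto_comap_iff.2 hg.tendsto_cofinite

theorem eventually_isLeftInversion_mul_iff (ht : cs.IsReflection t) (c : W) :
    ∀ᶠ w in atConjInfty t, cs.IsLeftInversion (w * c) t ↔ cs.IsLeftInversion w t := by
  filter_upwards [((finite_isLeftInversion c).eventually_cofinite_notMem).comap _] with w hw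
  rw [isLeftInversion_mul_iff ht, iff_false_right hw, not_not]

theorem not_isLeftInversion_of_commute (ht : cs.IsReflection t) (hc : Commute c t)
    (h : ∃ᶠ w in atConjInfty t, Commute w c) : ¬ cs.IsLeftInversion c t := by
  obtain ⟨w, hwc, hw⟩ := (h.and_eventually (eventually_isLeftInversion_mul_iff ht c)).exists
  rw [hwc.eq, isLeftInversion_mul_of_commute ht hc] at hw
  tauto

section Commutative

variable (hA : ∀ a ∈ A, ∀ b ∈ A, a * b = b * a) (ht : cs.IsReflection t)
variable (hinf : ((fun w ↦ w⁻¹ * t * w) '' (A : Set W)).Infinite)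
include hA

theorem inv_conj_eq_iff (hx : x ∈ A) (hy : y ∈ A) :
    x⁻¹ * t * x = y⁻¹ * t * y ↔ Commute (x⁻¹ * y) t := by
  rw [hA _ (A.inv_mem hx) _ hy, commute_iff_eq, ← mul_right_inj y, ← mul_left_inj x⁻¹]
  simp only [mul_assoc, mul_inv_cancel_left, mul_inv_cancel, mul_one]

include ht hinf

theorem isLeftInversion_congr (hx : x ∈ A) (hy : y ∈ A) (h : x⁻¹ * t * x = y⁻¹ * t * y) :
    cs.IsLeftInversion x t ↔ cs.IsLeftInversion y t := by
  have hc := (inv_conj_eq_iff hA hx hy).1 h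
  have hmem : x⁻¹ * y ∈ A := A.mul_mem (A.inv_mem hx) hy
  have hy' : x⁻¹ * y * x = y := by rw [hA _ hmem _ hx, mul_inv_cancel_left]
  have hinv := not_isLeftInversion_of_commute ht hc
    ((frequently_atConjInfty_mem_iff.2 hinf).mono fun w hw ↦ hA w hw _ hmem)
  rw [← hy', isLeftInversion_mul_of_commute ht hc]
  tauto

theorem eventually_isLeftInversion_inv_iff [A.Normal] :
    ∀ᶠ w in atConjInfty t, w ∈ A → (cs.IsLeftInversion w⁻¹ t ↔ ¬ cs.IsLeftInversion w t) := by
  filter_upwards [eventually_isLeftInversion_mul_iff ht t] with w hw hwA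
  have htwt : t * (w * t) ∈ A := by
    simpa [ht.inv, mul_assoc] using Subgroup.Normal.conj_mem ‹_› w hwA t
  have hconj : w⁻¹⁻¹ * t * w⁻¹ = (t * (w * t))⁻¹ * t * (t * (w * t)) := by
    rw [inv_conj_eq_iff hA (A.inv_mem hwA) htwt, inv_inv]
    have := hA w hwA _ htwt
    grind [Commute, SemiconjBy, ht.mul_self]
  rw [← hw, isLeftInversion_congr hA ht hinf (A.inv_mem hwA) htwt hconj,
    ht.isLeftInversion_mul_right_iff]

theorem not_injective_conj_zpow_mul_zpow [A.Normal] (hx : x ∈ A) (hy : y ∈ A) :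
    ¬ Function.Injective fun p : ℤ × ℤ ↦ (x ^ p.1 * y ^ p.2)⁻¹ * t * (x ^ p.1 * y ^ p.2) := by
  intro hinj
  have hcomm : Commute x y := hA x hx y hy
  have htendsto := tendsto_atConjInfty hinj
  refine not_eventually_neg_iff_not (f := fun p ↦ cs.IsLeftInversion (x ^ p.1 * y ^ p.2) t)
    ?_ ?_ ?_
  · filter_upwards [htendsto.eventually (eventually_isLeftInversion_mul_iff ht x)] with p hp
    rwa [Prod.fst_add, Prod.snd_add, add_zero, zpow_add_one, mul_assoc,
      (hcomm.zpow_right _).eq, ← mul_assoc]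
  · filter_upwards [htendsto.eventually (eventually_isLeftInversion_mul_iff ht y)] with p hp
    rwa [Prod.fst_add, Prod.snd_add, add_zero, zpow_add_one, ← mul_assoc]
  · filter_upwards [htendsto.eventually (eventually_isLeftInversion_inv_iff hA ht hinf)] with p hp
    rw [← hp (A.mul_mem (A.zpow_mem hx _) (A.zpow_mem hy _)), Prod.fst_neg, Prod.snd_neg, zpow_neg,
      zpow_neg, mul_inv_rev, ((hcomm.zpow_zpow _ _).inv_inv).eq]

end Commutative

section Powers

theorem tendsto_pow_atConjInfty (hm : Function.Injective fun k : ℤ ↦ (m ^ k)⁻¹ * t * m ^ k) :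
    Tendsto (fun k : ℕ ↦ m ^ k) atTop (atConjInfty t) := by
  rw [← Nat.cofinite_eq_atTop]
  exact tendsto_atConjInfty fun i j hij ↦ Nat.cast_injective (R := ℤ) (hm (by simpa using hij))

theorem eventually_isLeftInversion_pow_or_not (ht : cs.IsReflection t)
    (hm : Function.Injective fun k : ℤ ↦ (m ^ k)⁻¹ * t * m ^ k) :
    (∀ᶠ k : ℕ in atTop, cs.IsLeftInversion (m ^ k) t) ∨
      ∀ᶠ k : ℕ in atTop, ¬ cs.IsLeftInversion (m ^ k) t := by
  refine eventually_atTop_or_eventually_not ?_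
  filter_upwards [(tendsto_pow_atConjInfty hm).eventually
    (eventually_isLeftInversion_mul_iff ht m)] with k hk
  rwa [pow_succ]

variable (hA : ∀ a ∈ A, ∀ b ∈ A, a * b = b * a) (ht : cs.IsReflection t)
variable (hm₀A : m₀ ∈ A) (hm₀ : Function.Injective fun k : ℤ ↦ (m₀ ^ k)⁻¹ * t * m₀ ^ k)

include hm₀A hm₀ in
theorem infinite_image_inv_conj : ((fun w ↦ w⁻¹ * t * w) '' (A : Set W)).Infinite :=
  (Set.infinite_range_of_injective hm₀).mono
    (Set.range_subset_iff.2 fun k ↦ ⟨_, A.zpow_mem hm₀A k, rfl⟩)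

include hA ht hm₀A hm₀

theorem eventually_isLeftInversion_zpow_mul_iff [A.Normal] {p : ℤ} (hp : p ≠ 0)
    (hpos : ∀ᶠ k : ℕ in atTop, cs.IsLeftInversion (m₀ ^ k) t) :
    ∀ᶠ k : ℕ in atTop, cs.IsLeftInversion (m₀ ^ (p * k)) t ↔ 0 < p := by
  have hmul : Tendsto (fun k : ℕ ↦ p.natAbs * k) atTop atTop :=
    tendsto_id.const_mul_atTop' (Int.natAbs_pos.2 hp)
  filter_upwards [hmul.eventually hpos, hmul.eventually ((tendsto_pow_atConjInfty hm₀).eventually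
    (eventually_isLeftInversion_inv_iff hA ht (infinite_image_inv_conj hm₀A hm₀)))] with k hk hinv
  obtain hneg | hpos := hp.lt_or_gt
  · have habs : m₀ ^ (p * k) = (m₀ ^ (p.natAbs * k))⁻¹ := by
      rw [← zpow_natCast, ← zpow_neg, Nat.cast_mul, Int.ofNat_natAbs_of_nonpos hneg.le, neg_mul,
        neg_neg]
    rw [habs, hinv (A.pow_mem hm₀A _)]
    exact iff_of_false (not_not.2 hk) hneg.not_gt
  · lift p to ℕ using hpos.le
    exact iff_of_true (by exact_mod_cast hk) hpos

theorem eventually_isLeftInversion_pow_iff [A.Normal] (hmA : m ∈ A)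
    (hm : Function.Injective fun k : ℤ ↦ (m ^ k)⁻¹ * t * m ^ k) {p : ℤ} {q : ℕ} (hq : 0 < q)
    (h : (m ^ q)⁻¹ * t * m ^ q = (m₀ ^ p)⁻¹ * t * m₀ ^ p)
    (hpos : ∀ᶠ k : ℕ in atTop, cs.IsLeftInversion (m₀ ^ k) t) :
    ∀ᶠ k : ℕ in atTop, cs.IsLeftInversion (m ^ k) t ↔ 0 < p := by
  have hp : p ≠ 0 := by
    rintro rfl
    exact hq.ne' (Nat.cast_injective (R := ℤ) (hm (by simpa using h)))
  have hmul (k : ℕ) : cs.IsLeftInversion (m ^ (q * k)) t ↔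
      cs.IsLeftInversion (m₀ ^ (p * k)) t := by
    refine isLeftInversion_congr hA ht (infinite_image_inv_conj hm₀A hm₀) (A.pow_mem hmA _)
      (A.zpow_mem hm₀A _) ?_
    rw [inv_conj_eq_iff hA (A.pow_mem hmA _) (A.zpow_mem hm₀A _)] at h ⊢
    have hcomm : Commute (m ^ q)⁻¹ (m₀ ^ p) :=
      hA _ (A.inv_mem (A.pow_mem hmA _)) _ (A.zpow_mem hm₀A _)
    rw [pow_mul, ← inv_pow, zpow_mul, zpow_natCast, ← hcomm.mul_pow]
    exact h.pow_left k
  have hqk : Tendsto (fun k : ℕ ↦ q * k) atTop atTop := tendsto_id.const_mul_atTop' hq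
  have hsign := (eventually_isLeftInversion_zpow_mul_iff hA ht hm₀A hm₀ hp hpos).mono
    fun k hk ↦ (hmul k).trans hk
  obtain hev | hev := eventually_isLeftInversion_pow_or_not ht hm
  · obtain ⟨k, hk, hk'⟩ := (hsign.and (hqk.eventually hev)).exists
    exact hev.mono fun j hj ↦ iff_of_true hj (hk.1 hk')
  · obtain ⟨k, hk, hk'⟩ := (hsign.and (hqk.eventually hev)).exists
    exact hev.mono fun j hj ↦ iff_of_false hj (mt hk.2 hk')

end Powers

end Translations

theorem finite_setOf_isConj {G : Type*} [Group G] {A : Subgroup G} [A.FiniteIndex] {t : G}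
    (h : ∀ a ∈ A, Commute a t) : {x | IsConj t x}.Finite := by
  have hlift (g g' : G) (hg : QuotientGroup.leftRel A g g') : g * t * g⁻¹ = g' * t * g'⁻¹ := by
    have := (h _ (QuotientGroup.leftRel_apply.1 hg)).eq
    rw [← mul_right_inj g⁻¹, ← mul_left_inj g']
    simpa [mul_assoc] using this.symm
  let f : G ⧸ A → G := Quotient.lift (fun g ↦ g * t * g⁻¹) hlift
  refine (Set.finite_range f).subset fun x hx ↦ ?_
  obtain ⟨g, rfl⟩ := isConj_iff.1 hx
  exact ⟨QuotientGroup.mk g, rfl⟩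

theorem exists_invariant_form {G n : Type*} [Group G] [Finite n] (ρ : Representation ℚ G (n → ℚ))
    {H : Subgroup G} (hH : (H : Set G).Finite) :
    ∃ F : LinearMap.BilinForm ℚ (n → ℚ), (∀ x y, F x y = F y x) ∧ (∀ x ≠ 0, 0 < F x x) ∧
      ∀ u ∈ H, ∀ x y, F (ρ u x) (ρ u y) = F x y := by
  have : Fintype H := hH.fintype
  have : Fintype n := Fintype.ofFinite n
  let F : LinearMap.BilinForm ℚ (n → ℚ) :=
    ∑ u : H, (dotProductBilin ℚ ℚ).compl₁₂ (ρ u) (ρ u)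
  have hF (x y) : F x y = ∑ u : H, ρ u x ⬝ᵥ ρ u y := by simp [F, dotProductBilin]
  refine ⟨F, fun x y ↦ ?_, fun x hx ↦ ?_, fun u hu x y ↦ ?_⟩
  · simp only [hF, dotProduct_comm]
  · rw [hF]
    refine Finset.sum_pos (fun u _ ↦ ?_) ⟨1, Finset.mem_univ 1⟩
    have hux : ρ u x ≠ 0 := fun h ↦ hx (by simpa using congrArg (ρ (u : G)⁻¹) h)
    exact (Finset.sum_nonneg fun i _ ↦ mul_self_nonneg _).lt_of_ne'
      (mt dotProduct_self_eq_zero.1 hux)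
  · rw [hF, hF]
    refine Fintype.sum_equiv (Equiv.mulRight ⟨u, hu⟩) _ _ fun v ↦ ?_
    simp [map_mul]

theorem finrank_eigenspace_neg_add_finrank_eigenspace {𝕜 V : Type*} [Field 𝕜] [AddCommGroup V]
    [Module 𝕜 V] [FiniteDimensional 𝕜 V] (h2 : (2 : 𝕜) ≠ 0) {f : Module.End 𝕜 V} (hf : f * f = 1) :
    Module.finrank 𝕜 (Module.End.eigenspace (-f) (-1)) +
      Module.finrank 𝕜 (Module.End.eigenspace f (-1)) = Module.finrank 𝕜 V := by
  have hker : Module.End.eigenspace f (-1) = LinearMap.ker (f + 1) := by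
    ext x
    simp [eq_neg_iff_add_eq_zero]
  have hrange : Module.End.eigenspace (-f) (-1) = LinearMap.range (f + 1) := by
    ext x
    suffices f x = x ↔ ∃ y, f y + y = x by simpa
    refine ⟨fun h ↦ ⟨(2 : 𝕜)⁻¹ • x, ?_⟩, ?_⟩
    · rw [map_smul, h, ← two_smul 𝕜, smul_inv_smul₀ h2]
    · rintro ⟨y, rfl⟩
      rw [map_add, ← Module.End.mul_apply, hf, Module.End.one_apply, add_comm]
  rw [hker, hrange, LinearMap.finrank_range_add_finrank_ker]

/-! ### The reflection representation on `Λ_ℚ` -/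

namespace AffineData

open Filter

variable {cs : CoxeterSystem M W} (D : AffineData cs)
variable {l l₀ m : D.Lam} {t u v w : W}

theorem Jset_subset : D.Jset ⊆ Set.range cs.simple :=
  Set.sdiff_subset

instance : D.Lam.Normal :=
  D.hLam_normal

theorem iota_one : D.iota 1 = 0 := by
  ext; simp [iota]

theorem iota_mul (l m : D.Lam) : D.iota (l * m) = D.iota l + D.iota m := by
  ext; simp [iota]

theorem iota_zpow (l : D.Lam) (k : ℤ) : D.iota (l ^ k) = (k : ℚ) • D.iota l := by
  ext; simp [iota]

theorem iota_injective : Function.Injective D.iota := by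
  intro l m h
  refine D.freeIso.injective (Multiplicative.toAdd.injective (funext fun i ↦ ?_))
  exact Int.cast_injective (α := ℚ) (congrFun h i)

theorem exists_iota_eq_smul (x : Fin D.rank → ℚ) :
    ∃ k : ℤ, k ≠ 0 ∧ ∃ l, D.iota l = (k : ℚ) • x := by
  obtain ⟨k, hk⟩ := IsLocalization.exist_integer_multiples_of_finite (nonZeroDivisors ℤ) x
  choose y hy using hk
  refine ⟨k, nonZeroDivisors.coe_ne_zero k, D.freeIso.symm (Multiplicative.ofAdd y), ?_⟩
  ext i
  simpa [iota] using hy i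

theorem linearMap_ext {E : Type*} [AddCommGroup E] [Module ℚ E] {f g : (Fin D.rank → ℚ) →ₗ[ℚ] E}
    (h : ∀ l, f (D.iota l) = g (D.iota l)) : f = g := by
  refine LinearMap.ext fun x ↦ ?_
  obtain ⟨k, hk, l, hl⟩ := D.exists_iota_eq_smul x
  refine smul_right_injective E (Int.cast_ne_zero (α := ℚ).2 hk) ?_
  simp only [← map_smul, ← hl, h]

theorem rho_iota (w : W) (l : D.Lam) :
    D.rho w (D.iota l) = D.iota (MulAut.conjNormal w l) :=
  D.hrho w l

/-- The conjugation action `ρ` of `W` on `Λ_ℚ`, as a representation. -/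
def rep : Representation ℚ W (Fin D.rank → ℚ) where
  toFun := D.rho
  map_one' := D.linearMap_ext fun l ↦ by simp [rho_iota]
  map_mul' u v := D.linearMap_ext fun l ↦ by simp [rho_iota]

theorem rep_iota (w : W) (l : D.Lam) : D.rep w (D.iota l) = D.iota (MulAut.conjNormal w l) :=
  D.rho_iota w l

/-- The linear map `x ↦ x - ᵗx`; for a reflection `t` its image is the line of the root of `t`. -/
def displacement (t : W) : (Fin D.rank → ℚ) →ₗ[ℚ] (Fin D.rank → ℚ) :=
  1 - D.rep t

theorem displacement_apply (t : W) (x : Fin D.rank → ℚ) : D.displacement t x = x - D.rep t x :=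
  rfl

theorem commute_iff_displacement_eq_zero :
    Commute (l : W) t ↔ D.displacement t (D.iota l) = 0 := by
  rw [displacement_apply, sub_eq_zero, rep_iota, D.iota_injective.eq_iff, Subtype.ext_iff,
    MulAut.conjNormal_apply, eq_mul_inv_iff_mul_eq, commute_iff_eq]

theorem displacement_iota_zpow (t : W) (l : D.Lam) (k : ℤ) :
    D.displacement t (D.iota (l ^ k)) = (k : ℚ) • D.displacement t (D.iota l) := by
  rw [iota_zpow, map_smul]

theorem exists_displacement_ne_zero (ht : cs.IsReflection t) :
    ∃ l, D.displacement t (D.iota l) ≠ 0 := by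
  by_contra! h
  have htLam : t ∈ D.Lam := by
    have := D.hLam_index
    exact (D.hLam_mem t).2 (finite_setOf_isConj fun l hl ↦
      (D.commute_iff_displacement_eq_zero (l := ⟨l, hl⟩)).2 (h _))
  have htwo : (2 : ℚ) • D.iota ⟨t, htLam⟩ = 0 := by
    have hsq : (⟨t, htLam⟩ * ⟨t, htLam⟩ : D.Lam) = 1 := Subtype.ext ht.mul_self
    rw [two_smul, ← iota_mul, hsq, iota_one]
  have hone : t = 1 := congrArg Subtype.val (D.iota_injective
    (((smul_eq_zero.1 htwo).resolve_left two_ne_zero).trans D.iota_one.symm))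
  simpa [hone] using ht.odd_length

theorem inv_conj_eq_iff_displacement (l m : D.Lam) :
    (l : W)⁻¹ * t * l = (m : W)⁻¹ * t * m ↔
      D.displacement t (D.iota l) = D.displacement t (D.iota m) := by
  have hmul : D.iota m = D.iota l + D.iota (l⁻¹ * m) := by rw [← iota_mul, mul_inv_cancel_left]
  rw [inv_conj_eq_iff D.hLam_comm l.2 m.2, ← Subgroup.coe_inv, ← Subgroup.coe_mul,
    commute_iff_displacement_eq_zero, hmul, map_add, left_eq_add]

theorem injective_inv_conj_zpow (h : D.displacement t (D.iota l) ≠ 0) :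
    Function.Injective fun k : ℤ ↦ ((l : W) ^ k)⁻¹ * t * (l : W) ^ k := by
  intro i j hij
  have := (D.inv_conj_eq_iff_displacement (l ^ i) (l ^ j)).1 (by simpa using hij)
  rw [displacement_iota_zpow, displacement_iota_zpow] at this
  exact Int.cast_injective (smul_left_injective ℚ h this)

theorem exists_displacement_eq_smul (ht : cs.IsReflection t)
    (h : D.displacement t (D.iota l) ≠ 0) (x : Fin D.rank → ℚ) :
    ∃ c : ℚ, D.displacement t x = c • D.displacement t (D.iota l) := by
  obtain ⟨k, hk, m, hm⟩ := D.exists_iota_eq_smul x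
  have hninj := not_injective_conj_zpow_mul_zpow D.hLam_comm ht
    (infinite_image_inv_conj l.2 (D.injective_inv_conj_zpow h)) l.2 m.2
  obtain ⟨p, p', heq, hne⟩ := Function.not_injective_iff.1 hninj
  have hlin := (D.inv_conj_eq_iff_displacement (l ^ p.1 * m ^ p.2) (l ^ p'.1 * m ^ p'.2)).1
    (by simpa using heq)
  simp only [iota_mul, map_add, displacement_iota_zpow, hm, map_smul] at hlin
  have hdiff : ((p.1 - p'.1 : ℤ) : ℚ) • D.displacement t (D.iota l) =
      (((p'.2 - p.2 : ℤ) : ℚ) * k) • D.displacement t x := by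
    push_cast
    linear_combination (norm := module) hlin
  have hne₂ : p'.2 - p.2 ≠ 0 := by
    intro h₂
    rw [h₂, Int.cast_zero, zero_mul, zero_smul, smul_eq_zero, or_iff_left h, Int.cast_eq_zero,
      sub_eq_zero] at hdiff
    exact hne (Prod.ext hdiff (sub_eq_zero.1 h₂).symm)
  have hne₃ : ((p'.2 - p.2 : ℤ) : ℚ) * k ≠ 0 := by exact_mod_cast mul_ne_zero hne₂ hk
  exact ⟨(((p'.2 - p.2 : ℤ) : ℚ) * k)⁻¹ * (p.1 - p'.1 : ℤ), by
    rw [mul_smul, hdiff, inv_smul_smul₀ hne₃]⟩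

theorem eventually_isLeftInversion_pow_iff (ht : cs.IsReflection t)
    (h₀ : D.displacement t (D.iota l₀) ≠ 0)
    (hpos : ∀ᶠ k : ℕ in atTop, cs.IsLeftInversion ((l₀ : W) ^ k) t) {c : ℚ} (hc : c ≠ 0)
    (h : D.displacement t (D.iota l) = c • D.displacement t (D.iota l₀)) :
    ∀ᶠ k : ℕ in atTop, cs.IsLeftInversion ((l : W) ^ k) t ↔ 0 < c := by
  have hne : D.displacement t (D.iota l) ≠ 0 := h ▸ smul_ne_zero hc h₀
  rw [← Rat.num_pos]
  refine LY.eventually_isLeftInversion_pow_iff D.hLam_comm ht l₀.2 (D.injective_inv_conj_zpow h₀)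
    l.2 (D.injective_inv_conj_zpow hne) c.den_pos ?_ hpos
  have := (D.inv_conj_eq_iff_displacement (t := t) (l ^ (c.den : ℤ)) (l₀ ^ c.num)).2 (by
    rw [displacement_iota_zpow, displacement_iota_zpow, h, smul_smul, Int.cast_natCast,
      Rat.den_mul_eq_num])
  simpa using this

theorem displacement_rep_eq_zero_iff {x : Fin D.rank → ℚ} :
    D.displacement t (D.rep u x) = 0 ↔ D.displacement (u⁻¹ * t * u) x = 0 := by
  have h : D.rep t (D.rep u x) = D.rep u (D.rep (u⁻¹ * t * u) x) := by
    rw [← Module.End.mul_apply, ← Module.End.mul_apply, ← map_mul, ← map_mul, mul_assoc,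
      mul_inv_cancel_left]
  rw [displacement_apply, displacement_apply, h, ← map_sub,
    map_eq_zero_iff _ (D.rep.apply_bijective u).injective]

theorem isLongest_wJ : IsLongest cs D.Jset D.wJ :=
  isLongest_of_forall_length_le D.hwJ_mem D.hwJ_max

theorem exists_forall_displacement_ne_zero :
    ∃ l, ∀ t ∈ D.WJ, cs.IsReflection t → D.displacement t (D.iota l) ≠ 0 := by
  have : Finite {t // t ∈ D.WJ ∧ cs.IsReflection t} := D.hWJ_fin.subset fun _ ht ↦ ht.1
  obtain ⟨x, hx⟩ := Submodule.exists_forall_notMem_of_forall_ne_top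
    (fun t : {t // t ∈ D.WJ ∧ cs.IsReflection t} ↦ (D.displacement t.1).ker) fun t htop ↦ by
      obtain ⟨l, hl⟩ := D.exists_displacement_ne_zero t.2.2
      exact hl (LinearMap.mem_ker.1 (htop ▸ Submodule.mem_top))
  obtain ⟨k, hk, l, hl⟩ := D.exists_iota_eq_smul x
  refine ⟨l, fun t ht htr ↦ ?_⟩
  rw [hl, map_smul]
  exact smul_ne_zero (Int.cast_ne_zero.2 hk) (hx ⟨t, ht, htr⟩)

theorem eventually_isLeftInversion_conj_pow_iff (ht : cs.IsReflection t)
    (h : D.displacement (u⁻¹ * t * u) (D.iota l) ≠ 0) :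
    ∀ᶠ k : ℕ in atTop, cs.IsLeftInversion ((MulAut.conjNormal u l : W) ^ k) t ↔
      ¬ (cs.IsLeftInversion u t ↔ cs.IsLeftInversion ((l : W) ^ k) (u⁻¹ * t * u)) := by
  filter_upwards [(tendsto_pow_atConjInfty (D.injective_inv_conj_zpow h)).eventually
    (eventually_isLeftInversion_mul_iff (isReflection_inv_conj ht u) u⁻¹)] with k hk
  rw [MulAut.conjNormal_apply, conj_pow, mul_assoc, isLeftInversion_mul_iff ht, hk]

theorem exists_eventually_isLeftInversion_pow_iff
    (h : ∀ t ∈ D.WJ, cs.IsReflection t → D.displacement t (D.iota l) ≠ 0) :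
    ∃ u ∈ D.WJ, ∀ t ∈ D.WJ, cs.IsReflection t →
      ∀ᶠ k : ℕ in atTop, cs.IsLeftInversion ((l : W) ^ k) t ↔ cs.IsLeftInversion u t := by
  have hev : ∀ t ∈ (D.WJ : Set W), ∀ᶠ k : ℕ in atTop, cs.IsReflection t → ∀ᶠ j : ℕ in atTop,
      cs.IsLeftInversion ((l : W) ^ j) t ↔ cs.IsLeftInversion ((l : W) ^ k) t := by
    intro t ht
    by_cases htr : cs.IsReflection t
    · rcases eventually_isLeftInversion_pow_or_not htr (D.injective_inv_conj_zpow (h t ht htr))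
        with hl | hl
      · filter_upwards [hl] with k hk _
        filter_upwards [hl] with j hj using iff_of_true hj hk
      · filter_upwards [hl] with k hk _
        filter_upwards [hl] with j hj using iff_of_false hj hk
    · exact Eventually.of_forall fun _ h ↦ absurd h htr
  obtain ⟨k, hk⟩ := ((eventually_all_finite D.hWJ_fin).2 hev).exists
  obtain ⟨u, hu, y, hy, huy⟩ := exists_mul_isLeftReduced cs D.Jset ((l : W) ^ k)
  refine ⟨u, hu, fun t ht htr ↦ ?_⟩
  simpa only [← huy, hy.isLeftInversion_mul_iff hu ht] using hk t ht htr

/-- `λ` is in the interior of the dominant chamber: no reflection in `W_J` fixes it, and each of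
them is an inversion of every high multiple of `λ`. -/
def IsStrictlyDominant (l : D.Lam) : Prop :=
  ∀ t ∈ D.WJ, cs.IsReflection t → D.displacement t (D.iota l) ≠ 0 ∧
    ∀ᶠ k : ℕ in atTop, cs.IsLeftInversion ((l : W) ^ k) t

theorem exists_isStrictlyDominant : ∃ l, D.IsStrictlyDominant l := by
  obtain ⟨l, hl⟩ := D.exists_forall_displacement_ne_zero
  obtain ⟨u, hu, hlu⟩ := D.exists_eventually_isLeftInversion_pow_iff hl
  refine ⟨MulAut.conjNormal (D.wJ * u⁻¹) l, fun t ht htr ↦ ?_⟩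
  have hvt := inv_conj_mem ht (D.WJ.mul_mem D.hwJ_mem (D.WJ.inv_mem hu))
  have hvtr := isReflection_inv_conj htr (D.wJ * u⁻¹)
  refine ⟨?_, ?_⟩
  · rw [← rep_iota, ne_eq, displacement_rep_eq_zero_iff]
    exact hl _ hvt hvtr
  · filter_upwards [D.eventually_isLeftInversion_conj_pow_iff htr (hl _ hvt hvtr),
      hlu _ hvt hvtr] with k hk hlk
    rw [hk, hlk, ← isLeftInversion_mul_iff htr, inv_mul_cancel_right]
    exact D.isLongest_wJ.isLeftInversion t ht htr

theorem IsStrictlyDominant.exists_displacement_rep_eq_smul {D : AffineData cs} {l : D.Lam}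
    (hl : D.IsStrictlyDominant l) (ht : t ∈ D.WJ) (htr : cs.IsReflection t) (hu : u ∈ D.WJ) :
    ∃ c : ℚ, D.displacement t (D.rep u (D.iota l)) = c • D.displacement t (D.iota l) ∧
      (cs.IsLeftInversion u t ↔ c < 0) := by
  have hut := inv_conj_mem ht hu
  have hutr := isReflection_inv_conj htr u
  obtain ⟨c, hc⟩ := D.exists_displacement_eq_smul htr (hl t ht htr).1 (D.rep u (D.iota l))
  have hc₀ : c ≠ 0 := by
    rintro rfl
    rw [zero_smul, displacement_rep_eq_zero_iff] at hc
    exact (hl _ hut hutr).1 hc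
  refine ⟨c, hc, ?_⟩
  rw [rep_iota] at hc
  obtain ⟨k, h₁, h₂, h₃⟩ := ((D.eventually_isLeftInversion_conj_pow_iff htr (hl _ hut hutr).1).and
    ((hl _ hut hutr).2.and (D.eventually_isLeftInversion_pow_iff htr (hl t ht htr).1
      (hl t ht htr).2 hc₀ hc))).exists
  rw [h₃, iff_true_right h₂] at h₁
  rw [← not_iff_not, ← h₁, not_lt, hc₀.symm.le_iff_lt]

theorem form_displacement_eq {F : LinearMap.BilinForm ℚ (Fin D.rank → ℚ)}
    (ht : cs.IsReflection t) (hF : ∀ x y, F (D.rep t x) (D.rep t y) = F x y)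
    (x y : Fin D.rank → ℚ) :
    F (D.displacement t x) (D.displacement t y) = 2 * F (D.displacement t x) y := by
  have htt (z : Fin D.rank → ℚ) : D.rep t (D.rep t z) = z := by
    rw [← Module.End.mul_apply, ← map_mul, ht.mul_self, map_one, Module.End.one_apply]
  have h₁ := hF x y
  have h₂ := hF (D.rep t x) y
  rw [htt] at h₂
  simp only [displacement_apply, map_sub, LinearMap.sub_apply]
  linear_combination h₁ - h₂

theorem exists_euclideanReflectionRep :
    ∃ R : EuclideanReflectionRep cs D.Jset (Fin D.rank → ℚ), R.rep = D.rep := by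
  obtain ⟨l, hl⟩ := D.exists_isStrictlyDominant
  obtain ⟨F, hsymm, hpos, hinv⟩ := exists_invariant_form D.rep D.hWJ_fin
  have hform {t : W} (ht : t ∈ D.WJ) (htr : cs.IsReflection t) {x : Fin D.rank → ℚ} {c : ℚ}
      (hc : D.displacement t x = c • D.displacement t (D.iota l)) :
      2 * F (D.displacement t (D.iota l)) x =
        c * F (D.displacement t (D.iota l)) (D.displacement t (D.iota l)) := by
    rw [← D.form_displacement_eq htr (hinv t ht), hc, map_smul, smul_eq_mul]
  exact ⟨{
    subset := D.Jset_subset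
    finite := D.hWJ_fin
    rep := D.rep
    form := F
    form_comm := hsymm
    form_self_pos := hpos
    form_rep_rep := hinv
    root := fun t ↦ D.displacement t (D.iota l)
    rep_reflection := fun t ht htr x ↦ by
      obtain ⟨c, hc⟩ := D.exists_displacement_eq_smul htr (hl t ht htr).1 x
      rw [hform ht htr hc, mul_div_cancel_right₀ _ (hpos _ (hl t ht htr).1).ne', ← hc,
        displacement_apply, sub_sub_cancel]
    base := D.iota l
    isLeftInversion_iff := fun t ht htr u hu ↦ by
      obtain ⟨c, hc, hLI⟩ := hl.exists_displacement_rep_eq_smul ht htr hu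
      have hroot := hpos _ (hl t ht htr).1
      have h := hform ht htr hc
      rw [hLI, ← smul_neg_iff_of_pos_left hroot, smul_eq_mul, mul_comm, ← h, ← smul_eq_mul,
        smul_neg_iff_of_pos_left two_pos] }, rfl⟩

variable {b mu x : W}

/-! ### Minimal double coset representatives -/

theorem length_st_le (w : W) : cs.length (D.st w) ≤ cs.length w := by
  obtain ⟨ω, hω, rfl⟩ := cs.exists_isReduced w
  rw [hω]
  clear hω
  induction ω with
  | nil => simp
  | cons i ω ih =>
    obtain ⟨j, hj⟩ := D.hst_S _ ⟨i, rfl⟩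
    have h := cs.length_mul_le (cs.simple j) (D.st (cs.wordProd ω))
    rw [cs.length_simple] at h
    rw [cs.wordProd_cons, map_mul, ← hj, List.length_cons]
    lia

theorem length_st (w : W) : cs.length (D.st w) = cs.length w :=
  (D.length_st_le w).antisymm (by simpa only [D.hst_inv] using D.length_st_le (D.st w))

theorem isReflection_st (ht : cs.IsReflection t) : cs.IsReflection (D.st t) := by
  obtain ⟨w, i, rfl⟩ := ht
  obtain ⟨j, hj⟩ := D.hst_S _ ⟨i, rfl⟩
  rw [map_mul, map_mul, map_inv, ← hj]
  exact (cs.isReflection_simple j).conj _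

theorem st_mem_WJ (hu : u ∈ D.WJ) : D.st u ∈ D.WJ :=
  D.hst_J u hu ▸ D.WJ.mul_mem (D.WJ.mul_mem D.hwJ_mem hu) D.hwJ_mem

theorem poincare_WHstar (b : W) :
    poincare cs (D.WHstar b : Set W) = poincare cs (Subgroup.closure (D.Hset b) : Set W) := by
  have hmap : (D.WHstar b : Set W) = D.st '' Subgroup.closure (D.Hset b) := by
    rw [WHstar, Hstar]
    exact congrArg SetLike.coe (MonoidHom.map_closure D.st.toMonoidHom (D.Hset b)).symm
  rw [hmap, poincare_image cs D.st.injective D.length_st]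

theorem wJ_mul_self : D.wJ * D.wJ = 1 :=
  D.isLongest_wJ.mul_self D.Jset_subset

theorem inv_wJ : D.wJ⁻¹ = D.wJ :=
  D.isLongest_wJ.inv_eq_self D.Jset_subset

variable {D}

theorem IsDominant.isLeftReduced_inv (hmu : D.IsDominant mu) :
    IsLeftReduced cs D.Jset mu⁻¹ := by
  refine isLeftReduced_of_forall_length_le fun u hu ↦ ?_
  have h₁ := cs.length_mul_le (mu * u⁻¹) (u * D.wJ)
  have h₂ := D.isLongest_wJ.length_mul D.Jset_subset hu
  have h₃ := cs.length_inv (u * mu⁻¹)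
  rw [mul_assoc, inv_mul_cancel_left, hmu.2] at h₁
  rw [mul_inv_rev, inv_inv] at h₃
  rw [cs.length_inv]
  lia

theorem IsDominant.isLeftInversion_mul_wJ (hmu : D.IsDominant mu) (ht : t ∈ D.WJ)
    (hrefl : cs.IsReflection t) : cs.IsLeftInversion (mu * D.wJ) t := by
  have hst : D.st (mu * D.wJ) = D.wJ * mu⁻¹ := by
    rw [map_mul, D.hst_J _ D.hwJ_mem, D.hst_Lam _ hmu.1, D.inv_wJ, D.wJ_mul_self, one_mul,
      mul_inv_rev, mul_inv_rev, D.inv_wJ, mul_assoc, mul_assoc, D.wJ_mul_self, mul_one]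
  have h := (hmu.isLeftReduced_inv.isLeftInversion_mul_iff D.hwJ_mem (D.st_mem_WJ ht)).2
    (D.isLongest_wJ.isLeftInversion _ (D.st_mem_WJ ht) (D.isReflection_st hrefl))
  refine ⟨hrefl, ?_⟩
  simpa only [← hst, ← map_mul, length_st] using h.2

theorem isLeftReduced_of_min (hb_mem : b ∈ D.DCoset x)
    (hb_min : ∀ y ∈ D.DCoset x, cs.length b ≤ cs.length y) : IsLeftReduced cs D.Jset b := by
  obtain ⟨u, hu, v, hv, rfl⟩ := hb_mem
  exact isLeftReduced_of_forall_length_le fun w hw ↦ hb_min _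
    ⟨w * u, mul_mem hw hu, v, hv, by simp only [mul_assoc]⟩

theorem isLeftReduced_inv_of_min (hb_mem : b ∈ D.DCoset x)
    (hb_min : ∀ y ∈ D.DCoset x, cs.length b ≤ cs.length y) : IsLeftReduced cs D.Jset b⁻¹ := by
  obtain ⟨u, hu, v, hv, rfl⟩ := hb_mem
  refine isLeftReduced_of_forall_length_le fun w hw ↦ ?_
  rw [cs.length_inv, ← cs.length_inv (w * _), mul_inv_rev, inv_inv]
  exact hb_min _ ⟨u, hu, v * w⁻¹, mul_mem hv (inv_mem hw), by simp only [mul_assoc]⟩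

theorem pr_eq_of_mem (hu : u ∈ D.WJ) (h : w * u⁻¹ ∈ D.Lam) : D.pr w = u :=
  (D.hs0_hyper w).unique (D.hpr w) ⟨hu, h⟩

/-- The element of `W_J` sending the minimal element `b` to the dominant translation `μ` is
`w_J w_H`: multiplying by `w_J` on the right turns `b` into an element whose inversions in `W_J`
are the reflections in `W_H`, and `μ` into one for which they are all reflections in `W_J`. -/
theorem exists_isLongest_pr_eq (hmu : D.IsDominant mu) (hb_mem : b ∈ D.DCoset mu)
    (hb_min : ∀ y ∈ D.DCoset mu, cs.length b ≤ cs.length y) :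
    ∃ w, IsLongest cs (D.Hset b) w ∧ D.pr b = w * D.wJ := by
  have hJ := D.Jset_subset
  have hb := isLeftReduced_of_min hb_mem hb_min
  have hb' := isLeftReduced_inv_of_min hb_mem hb_min
  obtain ⟨u₀, hu₀, v₀, hv₀, rfl⟩ := hb_mem
  obtain ⟨u, hu, hub⟩ := hb.exists_eq_mul hJ hJ hb' hmu.isLeftReduced_inv (inv_mem hu₀)
    (inv_mem hv₀) (x := mu) (by group)
  set b := u₀ * mu * v₀
  obtain ⟨w, hw, y, hy, hwy⟩ := exists_mul_isLeftReduced cs D.Jset (b * D.wJ)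
  have hwH : IsLongest cs (D.Hset b) w :=
    D.isLongest_wJ.inter_image_conj hJ hJ hb hb' hw hy hwy
  refine ⟨w, hwH, D.pr_eq_of_mem (mul_mem hw D.hwJ_mem) ?_⟩
  have huw : u * w = D.wJ := by
    refine D.isLongest_wJ.unique hJ ⟨mul_mem hu hw, fun t ht hrefl ↦ ?_⟩
    rw [← hy.isLeftInversion_mul_iff (mul_mem hu hw) ht, mul_assoc, hwy, ← mul_assoc, ← hub]
    exact hmu.isLeftInversion_mul_wJ ht hrefl
  have hinv : w * D.wJ = u⁻¹ :=
    eq_inv_of_mul_eq_one_right (by rw [← mul_assoc, huw, D.wJ_mul_self])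
  rw [hinv, show b = u⁻¹ * mu from eq_inv_mul_of_mul_eq hub.symm]
  exact D.hLam_normal.conj_mem _ hmu.1 _

theorem eNeg_neg_rep_add_finrank (hww : w * w = 1) :
    D.eNeg (-D.rep w) + Module.finrank ℚ (Module.End.eigenspace (D.rep w) (-1)) = D.rank := by
  have hrep : D.rep w * D.rep w = 1 := by rw [← map_mul, hww, map_one]
  exact (finrank_eigenspace_neg_add_finrank_eigenspace two_ne_zero hrep).trans
    (Module.finrank_fin_fun ℚ)

end AffineData

/-- One has `φ(b) = n_J − n_{H*}`, where `n_J` and `n_{H*}` denote the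
numbers of odd exponents of the finite Weyl groups `W_J` and `W_{H*}` respectively, and `b`
is the shortest element of the double coset `W_J μ W_J`. -/
theorem phi_b_eq_nJ_sub_nHstar (cs : CoxeterSystem M W) (D : AffineData cs)
    (mu b : W) (hmu : D.IsDominant mu)
    (hb_mem : b ∈ D.DCoset mu)
    (hb_min : ∀ y ∈ D.DCoset mu, cs.length b ≤ cs.length y)
    (kJ : ℕ) (hkJ : kJ = D.Jset.ncard) (exJ : Fin kJ → ℕ) (hexJ_pos : ∀ i, 0 < exJ i)
    (hexJ : (∑ᶠ x : W, if x ∈ D.WJ then (Polynomial.X : Polynomial ℤ) ^ cs.length x else 0)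
        = ∏ i : Fin kJ, ∑ j ∈ Finset.range (exJ i + 1), (Polynomial.X : Polynomial ℤ) ^ j)
    (kH : ℕ) (hkH : kH = (D.Hstar b).ncard) (exH : Fin kH → ℕ) (hexH_pos : ∀ i, 0 < exH i)
    (hexH : (∑ᶠ x : W, if x ∈ D.WHstar b
          then (Polynomial.X : Polynomial ℤ) ^ cs.length x else 0)
        = ∏ i : Fin kH, ∑ j ∈ Finset.range (exH i + 1), (Polynomial.X : Polynomial ℤ) ^ j) :
    D.phi b = ((Finset.univ.filter fun i => Odd (exJ i)).card : ℤ)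
        - ((Finset.univ.filter fun i => Odd (exH i)).card : ℤ) := by
  obtain ⟨R, hR⟩ := D.exists_euclideanReflectionRep
  obtain ⟨w, hw, hpr⟩ := AffineData.exists_isLongest_pr_eq hmu hb_mem hb_min
  have hJ := EuclideanReflectionRep.card_odd_eq_negRank (R := R) subset_rfl D.isLongest_wJ
    ((poincare_eq_finsum_ite cs _).trans hexJ)
  have hH := EuclideanReflectionRep.card_odd_eq_negRank (R := R) Set.inter_subset_left hw
    ((D.poincare_WHstar b).symm.trans ((poincare_eq_finsum_ite cs _).trans hexH))
  rw [EuclideanReflectionRep.negRank, hR] at hJ hH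
  have heJ := D.eNeg_neg_rep_add_finrank D.wJ_mul_self
  have heH := D.eNeg_neg_rep_add_finrank (hw.mul_self (Set.inter_subset_left.trans D.Jset_subset))
  have hphi : D.phi b = D.eNeg (-D.rep w) - D.eNeg (-D.rep D.wJ) := by
    rw [AffineData.phi, AffineData.Amap, AffineData.Amap, hpr, mul_assoc, D.wJ_mul_self, mul_one,
      one_mul]
    rfl
  rw [hphi, hJ, hH]
  lia

end LY
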